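/- arXiv:1710.07131 — 2 statements merged into one kernel-verified Lean document; each statement's English description precedes it below -/
import Mathlib

section
/- Let m ≥ 2, ρ ∈ (0,1), a_1,…,a_m ∈ ℝ and let p = (p_1,…,p_m) be a probability vector with every p_j > 0. Let μ_ρ be the homogeneous self-similar measure of the IFS {f_j(x) = ρx + a_j}_{j=1}^m, and assume the IFS satisfies the strong separation condition. Then for every φ ∈ C²(ℝ) with φ''(t) > 0 for all t, and every g ∈ C¹(ℝ), there exist constants γ > 0 and C > 0 such that |∫ exp(2πiξφ(t)) g(t) dμ_ρ(t)| ≤ C|ξ|^{−γ} for all ξ with |ξ| ≥ 1. -/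
open MeasureTheory Real

/-!
Cutting the support into the cylinders of level `2N`, where `|ξ| ρ ^ (3N) ≈ 1`, and linearising the
phase on each of them bounds the oscillatory integral by the average over `y` of
`|μ̂ (ξ ρ ^ (2N) φ' y)|`. Since `φ'` is bi-Lipschitz on the convex hull of the support, these
frequencies are spread out like `μ` at scale `ρ ^ N`; by separation, each unit interval of
frequencies carries mass at most `C β ^ N`, where `β = max p j < 1`.

The average is then estimated by an Erdős–Kahane argument. The infinite product for `μ̂ t` contains
one factor for each of `t`, `ρ t`, `ρ² t`, …, and a factor is close to `1` only if its suitably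
normalised frequency is close to an integer. Whenever this happens at two consecutive scales, the
integer nearest to `ρ x` predicts the one nearest to `x`; a wrong prediction costs a factor `κ < 1`.
Hence the sum over unit cells of the `Q`-th power of the decay factor is at most a constant times
`(1 + c κ ^ Q) ^ N`. For `Q` large `β (1 + c κ ^ Q) < 1`, and Jensen's inequality removes the power.
-/

section Decay

open Set Filter Topology
open scoped ENNReal NNReal

section Calculus

variable {f : ℝ → ℝ} {s : Set ℝ}

lemma exists_pos_mul_abs_sub_le_abs_sub (hf : ContDiff ℝ 1 f) (hs : IsCompact s)
    (hconv : Convex ℝ s) (hf' : ∀ t ∈ s, deriv f t ≠ 0) :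
    ∃ c > 0, ∀ x ∈ s, ∀ y ∈ s, c * |x - y| ≤ |f x - f y| := by
  rcases s.eq_empty_or_nonempty with rfl | hne
  · exact ⟨1, one_pos, by simp⟩
  obtain ⟨u, hu, hmin⟩ :=
    hs.exists_isMinOn hne (hf.continuous_deriv le_rfl).abs.continuousOn
  refine ⟨|deriv f u|, abs_pos.2 (hf' u hu), fun x hx y hy ↦ ?_⟩
  wlog hyx : y < x generalizing x y
  · rcases (not_lt.1 hyx).eq_or_lt with rfl | hxy
    · simp
    · rw [abs_sub_comm x, abs_sub_comm (f x)]
      exact this y hy x hx hxy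
  obtain ⟨ζ, hζ, hslope⟩ := exists_deriv_eq_slope f hyx hf.continuous.continuousOn
    (hf.differentiable one_ne_zero).differentiableOn
  have hζs : ζ ∈ s := hconv.ordConnected.out hy hx (Ioo_subset_Icc_self hζ)
  calc |deriv f u| * |x - y| ≤ |deriv f ζ| * |x - y| :=
      mul_le_mul_of_nonneg_right (hmin hζs) (abs_nonneg _)
    _ = |f x - f y| := by
      rw [← abs_mul, hslope, div_mul_cancel₀ _ (sub_pos.2 hyx).ne']

lemma abs_sub_sub_deriv_mul_le {M : ℝ≥0} (hf : Differentiable ℝ f) (hs : Convex ℝ s)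
    (hM : LipschitzOnWith M (deriv f) s) {x y : ℝ} (hx : x ∈ s) (hy : y ∈ s) :
    |f y - f x - deriv f x * (y - x)| ≤ M * (y - x) ^ 2 := by
  have hsub : uIcc x y ⊆ s := hs.ordConnected.uIcc_subset hx hy
  have hderiv : ∀ t ∈ uIcc x y, HasDerivWithinAt (fun t ↦ f t - deriv f x * t)
      (deriv f t - deriv f x) (uIcc x y) t := fun t _ ↦ by
    simpa using
      ((hf t).hasDerivAt.fun_sub ((hasDerivAt_id t).const_mul (deriv f x))).hasDerivWithinAt
  have hbound : ∀ t ∈ uIcc x y, ‖deriv f t - deriv f x‖ ≤ M * |y - x| := fun t ht ↦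
    (hM.norm_sub_le (hsub ht) hx).trans
      (mul_le_mul_of_nonneg_left (abs_sub_left_of_mem_uIcc ht) M.2)
  calc |f y - f x - deriv f x * (y - x)|
      = ‖f y - deriv f x * y - (f x - deriv f x * x)‖ := by rw [Real.norm_eq_abs]; ring_nf
    _ ≤ M * |y - x| * ‖y - x‖ := (convex_uIcc x y).norm_image_sub_le_of_norm_hasDerivWithin_le
      hderiv hbound left_mem_uIcc right_mem_uIcc
    _ = M * (y - x) ^ 2 := by rw [Real.norm_eq_abs, mul_assoc, ← sq, sq_abs]

lemma norm_cexp_mul_sub_cexp_mul_le (u v x y : ℝ) :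
    ‖Complex.exp (u * Complex.I) * x - Complex.exp (v * Complex.I) * y‖ ≤
      |u - v| * |x| + |x - y| := by
  have hexp : ‖Complex.exp (u * Complex.I) - Complex.exp (v * Complex.I)‖ ≤ |u - v| := by
    have hfactor : Complex.exp (u * Complex.I) - Complex.exp (v * Complex.I) =
        Complex.exp (v * Complex.I) * (Complex.exp (Complex.I * ((u - v : ℝ) : ℂ)) - 1) := by
      rw [mul_sub, ← Complex.exp_add, mul_one]
      congr 2
      push_cast
      ring
    rw [hfactor, norm_mul, Complex.norm_exp_ofReal_mul_I, one_mul]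
    exact Real.norm_exp_I_mul_ofReal_sub_one_le
  calc ‖Complex.exp (u * Complex.I) * x - Complex.exp (v * Complex.I) * y‖
      = ‖(Complex.exp (u * Complex.I) - Complex.exp (v * Complex.I)) * x +
          Complex.exp (v * Complex.I) * ((x - y : ℝ) : ℂ)‖ := by push_cast; ring_nf
    _ ≤ |u - v| * |x| + |x - y| := by
      refine norm_add_le_of_le ?_ ?_
      · rw [norm_mul, Complex.norm_real, Real.norm_eq_abs]
        gcongr
      · rw [norm_mul, Complex.norm_exp_ofReal_mul_I, one_mul, Complex.norm_real, Real.norm_eq_abs]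

end Calculus

lemma exists_pos_forall_lt_dist {ι X : Type*} [Finite ι] [MetricSpace X] {K : ι → Set X}
    (hK : ∀ i, IsCompact (K i))
    (hdisj : ∀ i j, i ≠ j → Disjoint (K i) (K j)) :
    ∃ δ > 0, ∀ i j, i ≠ j → ∀ x ∈ K i, ∀ y ∈ K j, δ < dist x y := by
  have hpair : ∀ i j, ∀ᶠ δ in 𝓝[>] (0 : ℝ), i ≠ j → ∀ x ∈ K i, ∀ y ∈ K j, δ < dist x y := by
    intro i j
    by_cases hij : i = j
    · simp [hij]
    obtain ⟨r, hr, hlt⟩ := Metric.exists_pos_forall_lt_edist (hK i) (hK j).isClosed (hdisj i j hij)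
    filter_upwards [Ioo_mem_nhdsGT (NNReal.coe_pos.2 hr)] with δ hδ _ x hx y hy
    refine hδ.2.trans ?_
    simpa [edist_dist, ENNReal.lt_ofReal_iff_toReal_lt] using hlt x hx y hy
  obtain ⟨δ, hδ, hpos⟩ := ((eventually_all.2 fun i ↦ eventually_all.2 (hpair i)).and
    self_mem_nhdsWithin).exists
  exact ⟨δ, hpos, hδ⟩

lemma exists_pow_le_mul_rpow_neg {ω r : ℝ} (hω0 : 0 < ω) (hω1 : ω < 1) (hr0 : 0 < r) (hr1 : r < 1) :
    ∃ γ > (0 : ℝ), ∃ C > (0 : ℝ), ∀ x : ℝ, 1 ≤ x → ∃ N : ℕ, 1 ≤ x * r ^ N ∧ x * r ^ N ≤ r⁻¹ ∧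
      ω ^ N ≤ C * x ^ (-γ) := by
  have hlog : Real.log r < 0 := Real.log_neg hr0 hr1
  set γ : ℝ := Real.logb r ω
  have hγ0 : 0 < γ := div_pos_of_neg_of_neg (Real.log_neg hω0 hω1) hlog
  have hrγ : r ^ γ = ω := Real.rpow_logb hr0 hr1.ne hω0
  refine ⟨γ, hγ0, ω⁻¹, inv_pos.2 hω0, fun x hx ↦ ?_⟩
  have hx0 : 0 < x := one_pos.trans_le hx
  obtain ⟨N, hlt, hle⟩ := exists_nat_pow_near_of_lt_one (inv_pos.2 hx0)
    (inv_le_one_of_one_le₀ hx) hr0 hr1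
  refine ⟨N, ?_, ?_, ?_⟩
  · rwa [mul_comm, ← inv_le_iff_one_le_mul₀ hx0]
  · rw [← one_div, le_div_iff₀ hr0, mul_assoc, ← pow_succ, ← le_inv_mul_iff₀ hx0, mul_one]
    exact hlt.le
  · rw [inv_mul_eq_div, le_div_iff₀ hω0, ← pow_succ]
    calc ω ^ (N + 1) = (r ^ (N + 1)) ^ γ := by rw [← hrγ, Real.rpow_pow_comm hr0.le]
      _ ≤ x⁻¹ ^ γ := by gcongr
      _ = x ^ (-γ) := by rw [Real.inv_rpow hx0.le, Real.rpow_neg hx0.le]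

/-- `μ` satisfies the self-similarity equation of the homogeneous iterated function system
`x ↦ ρ * x + a j` with strictly positive probability weights `p j`. -/
structure IsHomogeneousSelfSimilar {ι : Type*} [Fintype ι] (ρ : ℝ) (a p : ι → ℝ)
    (μ : Measure ℝ) : Prop where
  weight_pos : ∀ j, 0 < p j
  sum_weight : ∑ j, p j = 1
  eq_sum_map : μ = ∑ j, ENNReal.ofReal (p j) • μ.map fun x ↦ ρ * x + a j

/-- The strong separation condition for the homogeneous iterated function system
`x ↦ ρ * x + a j` on its invariant set `K`: the first-level pieces of `K` are pairwise disjoint. -/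
def IsStronglySeparated {ι : Type*} (ρ : ℝ) (a : ι → ℝ) (K : Set ℝ) : Prop :=
  ∀ i j, i ≠ j → Disjoint ((fun x ↦ ρ * x + a i) '' K) ((fun x ↦ ρ * x + a j) '' K)

/-- The trigonometric polynomial `∑ j, p j * exp (i t a j)`, which is the characteristic function
of a random digit equal to `a j` with probability `p j`. -/
noncomputable def digitCharFun {ι : Type*} [Fintype ι] (a p : ι → ℝ) (t : ℝ) : ℂ :=
  ∑ j, (p j : ℂ) * Complex.exp (t * a j * Complex.I)

lemma integrable_of_continuousOn_of_ae_mem {X E : Type*} [TopologicalSpace X] [MeasurableSpace X]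
    [OpensMeasurableSpace X] [T2Space X] [NormedAddCommGroup E] {μ : Measure X}
    [IsFiniteMeasureOnCompacts μ] {K : Set X} {F : X → E} (hF : ContinuousOn F K)
    (hK : IsCompact K) (hsupp : ∀ᵐ x ∂μ, x ∈ K) : Integrable F μ := by
  rw [← Measure.restrict_eq_self_of_ae_mem hsupp]
  exact hF.integrableOn_compact hK

namespace IsHomogeneousSelfSimilar

variable {ι : Type*} [Fintype ι] {ρ : ℝ} {a p : ι → ℝ} {μ : Measure ℝ}

lemma nonempty (h : IsHomogeneousSelfSimilar ρ a p μ) : Nonempty ι := by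
  by_contra hι
  rw [not_nonempty_iff] at hι
  simpa using h.sum_weight

lemma integral_eq_sum {E : Type*} [NormedAddCommGroup E] [NormedSpace ℝ E]
    (h : IsHomogeneousSelfSimilar ρ a p μ) {F : ℝ → E} (hF : StronglyMeasurable F)
    (hFi : Integrable F μ) :
    ∫ x, F x ∂μ = ∑ j, p j • ∫ x, F (ρ * x + a j) ∂μ := by
  rw [h.eq_sum_map, integrable_finsetSum_measure] at hFi
  conv_lhs => rw [h.eq_sum_map]
  rw [integral_finsetSum_measure hFi]
  refine Finset.sum_congr rfl fun j _ ↦ ?_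
  rw [integral_smul_measure, ENNReal.toReal_ofReal (h.weight_pos j).le,
    integral_map (by fun_prop) hF.aestronglyMeasurable]

lemma measureReal_eq_sum [IsFiniteMeasure μ] (h : IsHomogeneousSelfSimilar ρ a p μ) {s : Set ℝ}
    (hs : MeasurableSet s) :
    μ.real s = ∑ j, p j * μ.real ((fun x ↦ ρ * x + a j) ⁻¹' s) := by
  have hind := h.integral_eq_sum (F := s.indicator 1) (stronglyMeasurable_one.indicator hs)
    ((integrable_const (1 : ℝ)).indicator hs)
  simp only [integral_indicator_one hs, smul_eq_mul] at hind
  rw [hind]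
  refine Finset.sum_congr rfl fun j _ ↦ ?_
  rw [← integral_indicator_one (hs.preimage (by fun_prop))]
  rfl

lemma ae_mem [IsFiniteMeasure μ] (h : IsHomogeneousSelfSimilar ρ a p μ) (hρ0 : 0 ≤ ρ)
    (hρ1 : ρ < 1) {K : Set ℝ} (hKcl : IsClosed K) (hKne : K.Nonempty)
    (hK : ∀ j, MapsTo (fun x ↦ ρ * x + a j) K K) : ∀ᵐ x ∂μ, x ∈ K := by
  set D : ℝ → ℝ := fun x ↦ Metric.infDist x K
  have hD : Continuous D := Metric.continuous_infDist_pt K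
  have hcontr : ∀ j x, D (ρ * x + a j) ≤ ρ * D x := by
    intro j x
    obtain ⟨y, hy, hxy⟩ := hKcl.exists_infDist_eq_dist hKne x
    calc D (ρ * x + a j) ≤ dist (ρ * x + a j) (ρ * y + a j) :=
          Metric.infDist_le_dist_of_mem (hK j hy)
      _ = ρ * dist x y := by
          rw [dist_add_right, Real.dist_eq, Real.dist_eq, ← mul_sub, abs_mul, abs_of_nonneg hρ0]
      _ = ρ * D x := by rw [← hxy]
  have hint : ∀ {u : ℝ → ℝ}, Continuous u → Integrable (fun x ↦ Real.arctan (u x)) μ :=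
    fun hu ↦ .of_bound (Real.continuous_arctan.comp hu).aestronglyMeasurable (π / 2)
      (ae_of_all _ fun x ↦ abs_le.2
        ⟨(Real.neg_pi_div_two_lt_arctan _).le, (Real.arctan_lt_pi_div_two _).le⟩)
  -- The bounded strictly increasing function `arctan` of the distance to `K` has finite
  -- integral, which self-similarity would strictly decrease if `μ` charged `Kᶜ`.
  have hle : ∫ x, Real.arctan (D x) ∂μ ≤ ∫ x, Real.arctan (ρ * D x) ∂μ := by
    calc ∫ x, Real.arctan (D x) ∂μ = ∑ j, p j • ∫ x, Real.arctan (D (ρ * x + a j)) ∂μ :=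
          h.integral_eq_sum (Real.continuous_arctan.comp hD).stronglyMeasurable (hint hD)
      _ ≤ ∑ j, p j • ∫ x, Real.arctan (ρ * D x) ∂μ := by
          refine Finset.sum_le_sum fun j _ ↦ smul_le_smul_of_nonneg_left ?_ (h.weight_pos j).le
          exact integral_mono (hint (by fun_prop)) (hint (by fun_prop))
            fun x ↦ Real.arctan_mono (hcontr j x)
      _ = ∫ x, Real.arctan (ρ * D x) ∂μ := by rw [← Finset.sum_smul, h.sum_weight, one_smul]
  have hmono : ∀ x, Real.arctan (ρ * D x) ≤ Real.arctan (D x) := fun x ↦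
    Real.arctan_mono (mul_le_of_le_one_left Metric.infDist_nonneg hρ1.le)
  have hint₁ : Integrable (fun x ↦ Real.arctan (ρ * D x)) μ := hint (by fun_prop)
  have heq := (integral_eq_iff_of_ae_le hint₁ (hint hD) (ae_of_all _ hmono)).1
    ((integral_mono hint₁ (hint hD) hmono).antisymm hle)
  filter_upwards [heq] with x hx
  have hDx : ρ * D x = D x := Real.arctan_injective hx
  have hD0 : D x = 0 := by
    have : (1 - ρ) * D x = 0 := by linarith
    exact (mul_eq_zero.1 this).resolve_left (sub_pos.2 hρ1).ne'
  exact (hKcl.mem_iff_infDist_zero hKne).2 hD0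

lemma norm_integral_le_integral [IsProbabilityMeasure μ] {E : Type*} [NormedAddCommGroup E]
    [NormedSpace ℝ E] (h : IsHomogeneousSelfSimilar ρ a p μ) {K : Set ℝ} (hKc : IsCompact K)
    (hK : ∀ j, MapsTo (fun x ↦ ρ * x + a j) K K) (hsupp : ∀ᵐ x ∂μ, x ∈ K) (n : ℕ)
    {F : ℝ → E} {G : ℝ → ℝ} (hF : Continuous F) (hG : Continuous G)
    (hFG : ∀ b, MapsTo (fun x ↦ ρ ^ n * x + b) K K →
      ∀ z ∈ K, ‖∫ x, F (ρ ^ n * x + b) ∂μ‖ ≤ G (ρ ^ n * z + b)) :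
    ‖∫ x, F x ∂μ‖ ≤ ∫ x, G x ∂μ := by
  induction n generalizing F G with
  | zero =>
    have hGi : Integrable G μ := integrable_of_continuousOn_of_ae_mem hG.continuousOn hKc hsupp
    have hconst : ∀ z ∈ K, ‖∫ x, F x ∂μ‖ ≤ G z := by
      simpa using hFG 0 fun z hz ↦ by simpa using hz
    calc ‖∫ x, F x ∂μ‖ = ∫ _, ‖∫ x, F x ∂μ‖ ∂μ := by simp
      _ ≤ ∫ z, G z ∂μ := integral_mono_ae (integrable_const _) hGi
          (hsupp.mono hconst)
  | succ n ih =>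
    have hFi : Integrable F μ := integrable_of_continuousOn_of_ae_mem hF.continuousOn hKc hsupp
    have hGi : Integrable G μ := integrable_of_continuousOn_of_ae_mem hG.continuousOn hKc hsupp
    have hpiece : ∀ j, ‖∫ x, F (ρ * x + a j) ∂μ‖ ≤ ∫ x, G (ρ * x + a j) ∂μ := by
      refine fun j ↦ ih (F := fun x ↦ F (ρ * x + a j)) (G := fun x ↦ G (ρ * x + a j))
        (by fun_prop) (by fun_prop) fun b hb z hz ↦ ?_
      have hcomp : ∀ x, ρ * (ρ ^ n * x + b) + a j = ρ ^ (n + 1) * x + (ρ * b + a j) :=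
        fun x ↦ by ring
      simp only [hcomp]
      exact hFG _ (fun x hx ↦ by simpa only [hcomp] using hK j (hb hx)) z hz
    rw [h.integral_eq_sum hF.stronglyMeasurable hFi, h.integral_eq_sum hG.stronglyMeasurable hGi]
    refine norm_sum_le_of_le _ fun j _ ↦ ?_
    rw [norm_smul, Real.norm_of_nonneg (h.weight_pos j).le, smul_eq_mul]
    exact mul_le_mul_of_nonneg_left (hpiece j) (h.weight_pos j).le

lemma charFun_eq [IsFiniteMeasure μ] (h : IsHomogeneousSelfSimilar ρ a p μ) (t : ℝ) :
    charFun μ t = digitCharFun a p t * charFun μ (ρ * t) := by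
  have hint : Integrable (fun x : ℝ ↦ Complex.exp (t * x * Complex.I)) μ :=
    .of_bound (by fun_prop) 1 (ae_of_all _ fun x ↦ by
      rw [← Complex.ofReal_mul, Complex.norm_exp_ofReal_mul_I])
  rw [charFun_apply_real,
    h.integral_eq_sum (F := fun x ↦ Complex.exp (t * x * Complex.I)) (by fun_prop) hint,
    digitCharFun, Finset.sum_mul]
  refine Finset.sum_congr rfl fun j _ ↦ ?_
  have hsplit : ∀ x : ℝ, Complex.exp (t * (ρ * x + a j : ℝ) * Complex.I) =
      Complex.exp (t * a j * Complex.I) * Complex.exp ((ρ * t : ℝ) * x * Complex.I) := by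
    intro x
    rw [← Complex.exp_add]
    push_cast
    ring_nf
  simp only [hsplit]
  rw [charFun_apply_real, Complex.real_smul, integral_const_mul]
  ring

lemma measureReal_Icc_le [IsProbabilityMeasure μ] (h : IsHomogeneousSelfSimilar ρ a p μ)
    (hρ0 : 0 < ρ) (hρ1 : ρ < 1) {K : Set ℝ} (hsupp : ∀ᵐ x ∂μ, x ∈ K) {δ : ℝ} (hδ0 : 0 ≤ δ)
    (hδ : ∀ i j, i ≠ j → ∀ x ∈ K, ∀ y ∈ K, δ < dist (ρ * x + a i) (ρ * y + a j))
    {β : ℝ} (hβ : ∀ j, p j ≤ β) (k : ℕ) (u : ℝ) :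
    μ.real (Icc u (u + δ * ρ ^ k)) ≤ β ^ k := by
  have hnull : ∀ {s : Set ℝ}, (∀ x ∈ K, x ∉ s) → μ.real s = 0 := fun hs ↦ by
    rw [measureReal_eq_zero_iff]
    exact measure_mono_null (fun x hx hxK ↦ hs x hxK hx) (ae_iff.1 hsupp)
  induction k generalizing u with
  | zero => simp
  | succ k ih =>
    have hβ0 : 0 ≤ β := h.nonempty.elim fun j ↦ (h.weight_pos j).le.trans (hβ j)
    set I : Set ℝ := Icc u (u + δ * ρ ^ (k + 1))
    rw [h.measureReal_eq_sum measurableSet_Icc]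
    by_cases hmeet : ∃ j₀, ∃ x₀ ∈ K, ρ * x₀ + a j₀ ∈ I
    · obtain ⟨j₀, x₀, hx₀, hx₀I⟩ := hmeet
      have hother : ∀ j ≠ j₀, ∀ x ∈ K, ρ * x + a j ∉ I := by
        intro j hj x hx hxI
        refine (hδ j j₀ hj x hx x₀ hx₀).not_ge ((Real.dist_le_of_mem_Icc hxI hx₀I).trans ?_)
        rw [add_sub_cancel_left]
        exact mul_le_of_le_one_right hδ0 (pow_le_one₀ hρ0.le hρ1.le)
      have hpre : (fun x ↦ ρ * x + a j₀) ⁻¹' I ⊆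
          Icc ((u - a j₀) / ρ) ((u - a j₀) / ρ + δ * ρ ^ k) := by
        rintro x ⟨hx₁, hx₂⟩
        have hright : (u - a j₀) / ρ + δ * ρ ^ k = (u - a j₀ + δ * ρ ^ (k + 1)) / ρ := by
          field_simp
          ring
        rw [hright, mem_Icc, div_le_iff₀ hρ0, le_div_iff₀ hρ0]
        constructor <;> linarith
      have hzero : ∀ j ≠ j₀, p j * μ.real ((fun x ↦ ρ * x + a j) ⁻¹' I) = 0 := fun j hj ↦
        mul_eq_zero_of_right _ (hnull (hother j hj))
      rw [Finset.sum_eq_single_of_mem j₀ (Finset.mem_univ _) fun j _ ↦ hzero j, pow_succ' β k]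
      exact mul_le_mul (hβ j₀) ((measureReal_mono hpre).trans (ih _)) measureReal_nonneg hβ0
    · push Not at hmeet
      have hzero : ∀ j, p j * μ.real ((fun x ↦ ρ * x + a j) ⁻¹' I) = 0 := fun j ↦
        mul_eq_zero_of_right _ (hnull (hmeet j))
      rw [Finset.sum_eq_zero fun j _ ↦ hzero j]
      positivity

end IsHomogeneousSelfSimilar

namespace IsHomogeneousSelfSimilar

variable {ι : Type*} [Fintype ι] {ρ : ℝ} {a p : ι → ℝ} {μ : Measure ℝ} [IsProbabilityMeasure μ]

lemma exists_measureReal_Icc_le (h : IsHomogeneousSelfSimilar ρ a p μ) (hρ0 : 0 < ρ) (hρ1 : ρ < 1)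
    {K : Set ℝ} (hKc : IsCompact K) (hsupp : ∀ᵐ x ∂μ, x ∈ K)
    (hsep : IsStronglySeparated ρ a K)
    {β : ℝ} (hβ : ∀ j, p j ≤ β) (hβ1 : β ≤ 1) (b : ℝ) :
    ∃ C > 0, ∀ (k : ℕ) (u : ℝ), μ.real (Icc u (u + b * ρ ^ k)) ≤ C * β ^ k := by
  have hβ0 : 0 < β := h.nonempty.elim fun j ↦ (h.weight_pos j).trans_le (hβ j)
  obtain ⟨δ, hδ0, hδ⟩ := exists_pos_forall_lt_dist
    (fun i ↦ hKc.image (f := fun x ↦ ρ * x + a i) (by fun_prop)) hsep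
  obtain ⟨k₀, hk₀⟩ : ∃ k₀ : ℕ, b * ρ ^ k₀ < δ := by
    have hlim : Tendsto (fun k ↦ b * ρ ^ k) atTop (𝓝 (b * 0)) :=
      (tendsto_pow_atTop_nhds_zero_of_lt_one hρ0.le hρ1).const_mul b
    exact (hlim.eventually_lt_const (by rwa [mul_zero])).exists
  refine ⟨(β ^ k₀)⁻¹, by positivity, fun k u ↦ ?_⟩
  rw [inv_mul_eq_div, le_div_iff₀ (by positivity)]
  rcases le_total k k₀ with hk | hk
  · calc μ.real (Icc u (u + b * ρ ^ k)) * β ^ k₀ ≤ 1 * β ^ k₀ := by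
          gcongr; exact measureReal_le_one
      _ ≤ β ^ k := by rw [one_mul]; exact pow_le_pow_of_le_one hβ0.le hβ1 hk
  · obtain ⟨l, rfl⟩ := Nat.exists_eq_add_of_le hk
    have hsub : Icc u (u + b * ρ ^ (k₀ + l)) ⊆ Icc u (u + δ * ρ ^ l) := by
      refine Icc_subset_Icc_right ?_
      rw [pow_add, ← mul_assoc]
      gcongr
    have hfrostman := h.measureReal_Icc_le hρ0 hρ1 hsupp hδ0.le
      (fun i j hij x hx y hy ↦ hδ i j hij _ (mem_image_of_mem _ hx) _ (mem_image_of_mem _ hy))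
      hβ l u
    rw [pow_add β, mul_comm (β ^ k₀)]
    gcongr
    exact (measureReal_mono hsub).trans hfrostman

lemma exists_measureReal_le_of_dist_le (h : IsHomogeneousSelfSimilar ρ a p μ) (hρ0 : 0 < ρ)
    (hρ1 : ρ < 1) {K : Set ℝ} (hKc : IsCompact K) (hsupp : ∀ᵐ x ∂μ, x ∈ K)
    (hsep : IsStronglySeparated ρ a K)
    {β : ℝ} (hβ : ∀ j, p j ≤ β) (hβ1 : β ≤ 1) (b : ℝ) :
    ∃ C > 0, ∀ (k : ℕ) (s : Set ℝ), (∀ x ∈ K ∩ s, ∀ y ∈ K ∩ s, dist x y ≤ b * ρ ^ k) →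
      μ.real s ≤ C * β ^ k := by
  have hβ0 : 0 < β := h.nonempty.elim fun j ↦ (h.weight_pos j).trans_le (hβ j)
  obtain ⟨C, hC0, hC⟩ := h.exists_measureReal_Icc_le hρ0 hρ1 hKc hsupp hsep hβ hβ1 (2 * b)
  refine ⟨C, hC0, fun k s hs ↦ ?_⟩
  have hinter : μ.real s = μ.real (K ∩ s) :=
    measureReal_congr (eventuallyEq_set.2 (hsupp.mono fun x hx ↦ (and_iff_right hx).symm))
  rw [hinter]
  rcases (K ∩ s).eq_empty_or_nonempty with hempty | ⟨x₀, hx₀⟩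
  · rw [hempty, measureReal_empty]
    positivity
  · refine (measureReal_mono fun y hy ↦ ?_).trans (hC k (x₀ - b * ρ ^ k))
    have hdist := abs_le.1 (hs y hy x₀ hx₀)
    constructor <;> linarith

end IsHomogeneousSelfSimilar

lemma exists_lt_one_forall_le {ι : Type*} [Fintype ι] [Nontrivial ι] {p : ι → ℝ}
    (hp : ∀ j, 0 < p j) (hp1 : ∑ j, p j = 1) : ∃ β < 1, ∀ j, p j ≤ β := by
  obtain ⟨j₀, -, hmax⟩ := Finset.univ.exists_max_image p Finset.univ_nonempty
  obtain ⟨k, hk⟩ := exists_ne j₀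
  refine ⟨p j₀, ?_, fun j ↦ hmax j (Finset.mem_univ j)⟩
  rw [← hp1]
  exact Finset.single_lt_sum hk (Finset.mem_univ _) (Finset.mem_univ _) (hp k)
    fun j _ _ ↦ (hp j).le

lemma cos_two_pi_mul_le (x : ℝ) : Real.cos (2 * π * x) ≤ 1 - 8 * (x - round x) ^ 2 := by
  have habs : |2 * π * (x - round x)| ≤ π := by
    rw [abs_mul, abs_of_pos two_pi_pos]
    nlinarith [abs_sub_round x, pi_pos]
  calc Real.cos (2 * π * x) = Real.cos (2 * π * (x - round x)) := by
        rw [← Real.cos_sub_int_mul_two_pi _ (round x)]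
        ring_nf
    _ ≤ 1 - 2 / π ^ 2 * (2 * π * (x - round x)) ^ 2 := Real.cos_le_one_sub_mul_cos_sq habs
    _ = 1 - 8 * (x - round x) ^ 2 := by
        field_simp
        ring

lemma le_abs_sub_round_or_of_round_ne {ρ x : ℝ} (hρ : 0 < ρ)
    (hx : round x ≠ round (ρ⁻¹ * round (ρ * x))) :
    (2 * (1 + ρ⁻¹))⁻¹ ≤ |x - round x| ∨ (2 * (1 + ρ⁻¹))⁻¹ ≤ |ρ * x - round (ρ * x)| := by
  contrapose! hx
  have hsplit : ρ⁻¹ * round (ρ * x) - round x =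
      (x - round x) - ρ⁻¹ * (ρ * x - round (ρ * x)) := by
    field_simp
    ring
  have hlt : |ρ⁻¹ * round (ρ * x) - round x| < 1 / 2 := by
    calc |ρ⁻¹ * round (ρ * x) - round x|
        ≤ |x - round x| + ρ⁻¹ * |ρ * x - round (ρ * x)| := by
          rw [hsplit, ← abs_of_pos (inv_pos.2 hρ), ← abs_mul, abs_of_pos (inv_pos.2 hρ)]
          exact abs_sub _ _
      _ < (2 * (1 + ρ⁻¹))⁻¹ + ρ⁻¹ * (2 * (1 + ρ⁻¹))⁻¹ := by
          gcongr
          · exact hx.1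
          · exact hx.2
      _ = 1 / 2 := by
          field_simp
  rw [abs_lt] at hlt
  exact (round_eq_iff.2 ⟨by linarith, by linarith⟩).symm

lemma sq_norm_mul_cexp_add_mul_cexp (x y u v : ℝ) :
    ‖x * Complex.exp (u * Complex.I) + y * Complex.exp (v * Complex.I)‖ ^ 2 =
      (x + y) ^ 2 - 2 * (x * y) * (1 - Real.cos (u - v)) := by
  rw [Complex.sq_norm, Complex.normSq_apply, Real.cos_sub]
  simp only [Complex.add_re, Complex.re_ofReal_mul, Complex.exp_ofReal_mul_I_re, Complex.add_im,
    Complex.im_ofReal_mul, Complex.exp_ofReal_mul_I_im]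
  linear_combination x ^ 2 * Real.sin_sq_add_cos_sq u + y ^ 2 * Real.sin_sq_add_cos_sq v

section DigitCharFun

variable {ι : Type*} {a p : ι → ℝ}

lemma norm_sum_weight_mul_cexp_le (hp : ∀ j, 0 ≤ p j) (s : Finset ι) (t : ℝ) :
    ‖∑ j ∈ s, (p j : ℂ) * Complex.exp (t * a j * Complex.I)‖ ≤ ∑ j ∈ s, p j :=
  norm_sum_le_of_le s fun j _ ↦ by
    rw [norm_mul, ← Complex.ofReal_mul, Complex.norm_exp_ofReal_mul_I, mul_one,
      Complex.norm_of_nonneg (hp j)]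

variable [Fintype ι]

lemma norm_digitCharFun_le_one (hp : ∀ j, 0 ≤ p j) (hp1 : ∑ j, p j = 1) (t : ℝ) :
    ‖digitCharFun a p t‖ ≤ 1 :=
  hp1 ▸ norm_sum_weight_mul_cexp_le hp Finset.univ t

lemma sq_norm_digitCharFun_le (hp : ∀ j, 0 ≤ p j) (hp1 : ∑ j, p j = 1) {j k : ι} (hjk : j ≠ k)
    (t : ℝ) :
    ‖digitCharFun a p t‖ ^ 2 ≤ 1 - 2 * (p j * p k) * (1 - Real.cos (t * a j - t * a k)) := by
  classical
  set T : ℂ := p j * Complex.exp (t * a j * Complex.I) + p k * Complex.exp (t * a k * Complex.I)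
  have hT : ‖T‖ ^ 2 = (p j + p k) ^ 2 -
      2 * (p j * p k) * (1 - Real.cos (t * a j - t * a k)) := by
    rw [← sq_norm_mul_cexp_add_mul_cexp]
    push_cast
    rfl
  have hTle : ‖T‖ ≤ p j + p k := by
    simpa only [Finset.sum_pair hjk] using norm_sum_weight_mul_cexp_le (a := a) hp {j, k} t
  have hrest : p j + p k + ∑ l ∈ {j, k}ᶜ, p l = 1 := by
    rw [← hp1, ← Finset.sum_add_sum_compl {j, k}, Finset.sum_pair hjk]
  have hrest0 : 0 ≤ ∑ l ∈ {j, k}ᶜ, p l := Finset.sum_nonneg fun l _ ↦ hp l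
  have hle : ‖digitCharFun a p t‖ ≤ ‖T‖ + ∑ l ∈ {j, k}ᶜ, p l := by
    rw [digitCharFun, ← Finset.sum_add_sum_compl {j, k}, Finset.sum_pair hjk]
    exact norm_add_le_of_le le_rfl (norm_sum_weight_mul_cexp_le hp _ t)
  have hsq := pow_le_pow_left₀ (norm_nonneg _) hle 2
  nlinarith

lemma sq_norm_digitCharFun_two_pi_mul_div_le (hp : ∀ j, 0 ≤ p j) (hp1 : ∑ j, p j = 1) {j k : ι}
    (hjk : a j ≠ a k) (x : ℝ) :
    ‖digitCharFun a p (2 * π * x / (a j - a k))‖ ^ 2 ≤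
      1 - 16 * (p j * p k) * (x - round x) ^ 2 := by
  have hd : a j - a k ≠ 0 := sub_ne_zero.2 hjk
  have harg : 2 * π * x / (a j - a k) * a j - 2 * π * x / (a j - a k) * a k = 2 * π * x := by
    rw [← mul_sub, div_mul_cancel₀ _ hd]
  have hsq := sq_norm_digitCharFun_le (a := a) hp hp1 (ne_of_apply_ne a hjk)
    (2 * π * x / (a j - a k))
  rw [harg] at hsq
  nlinarith [cos_two_pi_mul_le x, mul_nonneg (hp j) (hp k)]

end DigitCharFun

section ErdosKahane

variable {ρ R : ℝ} {c : ℝ≥0∞} {h : ℝ → ℝ≥0∞} {S T : Set ℝ}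

/-- The supremum of `h` over the points of `S` whose nearest integer is `n`; the Erdős–Kahane
argument bounds the total over all cells `n`. -/
noncomputable def cellSup (h : ℝ → ℝ≥0∞) (S : Set ℝ) (n : ℤ) : ℝ≥0∞ :=
  ⨆ x ∈ {x ∈ S | round x = n}, h x

/-- The weight of the transition from `n' = round (ρ * x)` to `n = round x`: it is `1` for the value
of `n` predicted by `n'`, and `c` for each of the boundedly many values compatible with `n'`. -/
noncomputable def transitionWeight (ρ : ℝ) (c : ℝ≥0∞) (n n' : ℤ) : ℝ≥0∞ :=
  (if n = round (ρ⁻¹ * n') then 1 else 0) + if |n - ρ⁻¹ * n'| ≤ (ρ⁻¹ + 1) / 2 then c else 0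

lemma tsum_ite_abs_sub_le (c : ℝ≥0∞) (x : ℝ) {r : ℝ} (hr : 0 ≤ r) :
    ∑' n : ℤ, (if |n - x| ≤ r then c else 0) ≤ ENNReal.ofReal (2 * r + 1) * c := by
  have hmem : ∀ n : ℤ, |n - x| ≤ r ↔ n ∈ Finset.Icc ⌈x - r⌉ ⌊x + r⌋ := fun n ↦ by
    rw [Finset.mem_Icc, Int.ceil_le, Int.le_floor, abs_le]
    constructor <;> rintro ⟨h₁, h₂⟩ <;> constructor <;> linarith
  have hcard : ((⌊x + r⌋ + 1 - ⌈x - r⌉).toNat : ℝ) ≤ 2 * r + 1 := by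
    rw [← Int.cast_natCast, Int.toNat_eq_max]
    push_cast
    exact max_le (by linarith [Int.floor_le (x + r), Int.le_ceil (x - r)]) (by linarith)
  simp only [hmem]
  rw [tsum_eq_sum fun n hn ↦ if_neg hn, Finset.sum_ite_mem, Finset.inter_self, Finset.sum_const,
    nsmul_eq_mul, Int.card_Icc, ← ENNReal.ofReal_natCast]
  gcongr

lemma tsum_transitionWeight_le (hρ : 0 < ρ) (c : ℝ≥0∞) (n' : ℤ) :
    ∑' n, transitionWeight ρ c n n' ≤ 1 + ENNReal.ofReal (ρ⁻¹ + 2) * c := by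
  have hcount := tsum_ite_abs_sub_le c (ρ⁻¹ * n') (r := (ρ⁻¹ + 1) / 2) (by positivity)
  simp only [transitionWeight, ENNReal.tsum_add, tsum_ite_eq]
  convert add_le_add_right hcount 1 using 4
  ring

lemma le_cellSup {x : ℝ} (hx : x ∈ S) : h x ≤ cellSup h S (round x) :=
  le_biSup h (i := x) ⟨hx, rfl⟩

lemma cellSup_le_tsum (hρ : 0 < ρ) (hmono : ∀ x, h x ≤ h (ρ * x))
    (hcarry : ∀ x, round x ≠ round (ρ⁻¹ * round (ρ * x)) → h x ≤ c * h (ρ * x))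
    (hST : MapsTo (ρ * ·) S T) (n : ℤ) :
    cellSup h S n ≤ ∑' n', transitionWeight ρ c n n' * cellSup h T n' := by
  refine iSup₂_le fun x ⟨hxS, hxn⟩ ↦ ?_
  subst hxn
  suffices hx : h x ≤ transitionWeight ρ c (round x) (round (ρ * x)) * h (ρ * x) from
    (hx.trans (by gcongr; exact le_cellSup (hST hxS))).trans
      (ENNReal.le_tsum (f := fun n' ↦ transitionWeight ρ c (round x) n' * cellSup h T n') _)
  by_cases hpred : round x = round (ρ⁻¹ * round (ρ * x))
  · refine (hmono x).trans (le_mul_of_one_le_left' ?_)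
    rw [transitionWeight, if_pos hpred]
    exact le_self_add
  · have hclose : |round x - ρ⁻¹ * round (ρ * x)| ≤ (ρ⁻¹ + 1) / 2 := by
      have hsplit : round x - ρ⁻¹ * round (ρ * x) =
          ρ⁻¹ * (ρ * x - round (ρ * x)) - (x - round x) := by
        field_simp
        ring
      calc |round x - ρ⁻¹ * round (ρ * x)|
          ≤ |ρ⁻¹ * (ρ * x - round (ρ * x))| + |x - round x| := by rw [hsplit]; exact abs_sub _ _
        _ ≤ ρ⁻¹ * (1 / 2) + 1 / 2 := by
          rw [abs_mul, abs_of_pos (inv_pos.2 hρ)]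
          gcongr <;> exact abs_sub_round _
        _ = (ρ⁻¹ + 1) / 2 := by ring
    rw [transitionWeight, if_neg hpred, if_pos hclose, zero_add]
    exact hcarry x hpred

lemma tsum_cellSup_Icc_le (hh : ∀ x, h x ≤ 1) (hR : 0 ≤ R) :
    ∑' n, cellSup h {x | |x| ≤ R} n ≤ ENNReal.ofReal (2 * R + 2) := by
  have hcell : ∀ n : ℤ, cellSup h {x | |x| ≤ R} n ≤ if |n - (0 : ℝ)| ≤ R + 1 / 2 then 1 else 0 := by
    refine fun n ↦ iSup₂_le fun x ⟨hxR, hxn⟩ ↦ ?_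
    subst hxn
    rw [if_pos]
    · exact hh x
    calc |round x - (0 : ℝ)| ≤ |(round x : ℝ) - x| + |x - 0| := abs_sub_le _ _ _
      _ ≤ R + 1 / 2 := by
        rw [abs_sub_comm, sub_zero, add_comm]
        exact add_le_add hxR (abs_sub_round x)
  refine (ENNReal.tsum_le_tsum hcell).trans ((tsum_ite_abs_sub_le 1 0 (by positivity)).trans_eq ?_)
  rw [mul_one]
  ring_nf

lemma tsum_cellSup_le (hρ : 0 < ρ) (hh : ∀ x, h x ≤ 1) (hmono : ∀ x, h x ≤ h (ρ * x))
    (hcarry : ∀ x, round x ≠ round (ρ⁻¹ * round (ρ * x)) → h x ≤ c * h (ρ * x)) (hR : 0 ≤ R)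
    (N : ℕ) :
    ∑' n, cellSup h {x | |ρ ^ N * x| ≤ R} n ≤
      ENNReal.ofReal (2 * R + 2) * (1 + ENNReal.ofReal (ρ⁻¹ + 2) * c) ^ N := by
  induction N with
  | zero => simpa using tsum_cellSup_Icc_le hh hR
  | succ N ih =>
    set T : Set ℝ := {x | |ρ ^ N * x| ≤ R}
    have hST : MapsTo (ρ * ·) {x | |ρ ^ (N + 1) * x| ≤ R} T := fun x (hx : |_| ≤ R) ↦ by
      rwa [pow_succ, mul_assoc] at hx
    calc ∑' n, cellSup h {x | |ρ ^ (N + 1) * x| ≤ R} n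
        ≤ ∑' n, ∑' n', transitionWeight ρ c n n' * cellSup h T n' :=
          ENNReal.tsum_le_tsum (cellSup_le_tsum hρ hmono hcarry hST)
      _ = ∑' n', (∑' n, transitionWeight ρ c n n') * cellSup h T n' := by
          rw [ENNReal.tsum_comm]
          simp only [ENNReal.tsum_mul_right]
      _ ≤ ∑' n', (1 + ENNReal.ofReal (ρ⁻¹ + 2) * c) * cellSup h T n' := by
          gcongr
          exact tsum_transitionWeight_le hρ c _
      _ ≤ (1 + ENNReal.ofReal (ρ⁻¹ + 2) * c) *
            (ENNReal.ofReal (2 * R + 2) * (1 + ENNReal.ofReal (ρ⁻¹ + 2) * c) ^ N) := by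
          rw [ENNReal.tsum_mul_left]
          gcongr
      _ = _ := by ring

lemma lintegral_comp_le_mul_tsum_cellSup {Ω : Type*} [MeasurableSpace Ω] {μ : Measure Ω}
    {u : Ω → ℝ} (hu : Measurable u) (huS : ∀ᵐ y ∂μ, u y ∈ S) {α : ℝ≥0∞}
    (hα : ∀ n, μ {y | round (u y) = n} ≤ α) :
    ∫⁻ y, h (u y) ∂μ ≤ α * ∑' n, cellSup h S n := by
  have hround : Measurable fun y ↦ round (u y) := by
    simp only [round_eq]
    fun_prop
  calc ∫⁻ y, h (u y) ∂μ ≤ ∫⁻ y, cellSup h S (round (u y)) ∂μ :=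
        lintegral_mono_ae (huS.mono fun y hy ↦ le_cellSup hy)
    _ = ∑' n, cellSup h S n * μ {y | round (u y) = n} := by
        rw [← lintegral_map (f := cellSup h S) (measurable_of_countable _) hround,
          lintegral_countable']
        refine tsum_congr fun n ↦ ?_
        rw [Measure.map_apply hround (measurableSet_singleton n)]
        rfl
    _ ≤ ∑' n, cellSup h S n * α := by gcongr; exact hα _
    _ = α * ∑' n, cellSup h S n := by rw [ENNReal.tsum_mul_right, mul_comm]

lemma integral_comp_le_mul_pow {Ω : Type*} [MeasurableSpace Ω] {μ : Measure Ω} [IsFiniteMeasure μ]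
    {ρ κ R α : ℝ} {f : ℝ → ℝ} {u : Ω → ℝ} {N : ℕ} (hρ : 0 < ρ) (hκ : 0 ≤ κ) (hR : 0 ≤ R)
    (hf : Measurable f) (hf0 : ∀ x, 0 ≤ f x) (hf1 : ∀ x, f x ≤ 1)
    (hmono : ∀ x, f x ≤ f (ρ * x))
    (hcarry : ∀ x, round x ≠ round (ρ⁻¹ * round (ρ * x)) → f x ≤ κ * f (ρ * x))
    (hu : Measurable u) (huR : ∀ᵐ y ∂μ, |ρ ^ N * u y| ≤ R)
    (hα : ∀ n, μ.real {y | round (u y) = n} ≤ α) :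
    ∫ y, f (u y) ∂μ ≤ α * ((2 * R + 2) * (1 + (ρ⁻¹ + 2) * κ) ^ N) := by
  have hα0 : 0 ≤ α := measureReal_nonneg.trans (hα 0)
  have hcell : ∀ n, μ {y | round (u y) = n} ≤ ENNReal.ofReal α := fun n ↦ by
    rw [← ofReal_measureReal]
    exact ENNReal.ofReal_le_ofReal (hα n)
  have htsum := tsum_cellSup_le (h := fun x ↦ ENNReal.ofReal (f x)) (c := ENNReal.ofReal κ) hρ
    (fun x ↦ ENNReal.ofReal_le_one.2 (hf1 x)) (fun x ↦ ENNReal.ofReal_le_ofReal (hmono x))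
    (fun x hx ↦ by
      rw [← ENNReal.ofReal_mul hκ]
      exact ENNReal.ofReal_le_ofReal (hcarry x hx)) hR N
  rw [integral_eq_lintegral_of_nonneg_ae (ae_of_all _ fun y ↦ hf0 _)
    (hf.comp hu).aestronglyMeasurable]
  refine ENNReal.toReal_le_of_le_ofReal (by positivity) ?_
  refine (lintegral_comp_le_mul_tsum_cellSup (h := fun x ↦ ENNReal.ofReal (f x))
    (S := {x | |ρ ^ N * x| ≤ R}) hu huR hcell).trans ?_
  rw [ENNReal.ofReal_mul hα0, ENNReal.ofReal_mul (by positivity),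
    ENNReal.ofReal_pow (by positivity),
    ENNReal.ofReal_add zero_le_one (by positivity), ENNReal.ofReal_mul (by positivity),
    ENNReal.ofReal_one]
  gcongr

end ErdosKahane

/-- The product of the moduli of the characteristic function of `μ` at `t` and at `ρ * t`. The
product is needed because a wrongly predicted rounding only forces decay at one of two
consecutive scales. -/
noncomputable def charFunPair (ρ : ℝ) (μ : Measure ℝ) (t : ℝ) : ℝ :=
  ‖charFun μ t‖ * ‖charFun μ (ρ * t)‖

lemma charFunPair_nonneg (ρ : ℝ) (μ : Measure ℝ) (t : ℝ) : 0 ≤ charFunPair ρ μ t := by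
  unfold charFunPair
  positivity

lemma continuous_charFunPair (ρ : ℝ) (μ : Measure ℝ) [IsFiniteMeasure μ] :
    Continuous (charFunPair ρ μ) := by
  unfold charFunPair
  fun_prop

lemma charFunPair_le_one (ρ : ℝ) (μ : Measure ℝ) [IsProbabilityMeasure μ] (t : ℝ) :
    charFunPair ρ μ t ≤ 1 :=
  mul_le_one₀ (norm_charFun_le_one _) (norm_nonneg _) (norm_charFun_le_one _)

namespace IsHomogeneousSelfSimilar

variable {ι : Type*} [Fintype ι] {ρ : ℝ} {a p : ι → ℝ} {μ : Measure ℝ}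

lemma norm_digitCharFun_le (h : IsHomogeneousSelfSimilar ρ a p μ) (t : ℝ) :
    ‖digitCharFun a p t‖ ≤ 1 :=
  norm_digitCharFun_le_one (fun j ↦ (h.weight_pos j).le) h.sum_weight t

section FiniteMeasure

variable [IsFiniteMeasure μ]

lemma charFunPair_eq (h : IsHomogeneousSelfSimilar ρ a p μ) (t : ℝ) :
    charFunPair ρ μ t =
      ‖digitCharFun a p t‖ * ‖digitCharFun a p (ρ * t)‖ * charFunPair ρ μ (ρ * t) := by
  rw [charFunPair, h.charFun_eq t, h.charFun_eq (ρ * t), charFunPair, h.charFun_eq (ρ * t)]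
  simp only [norm_mul]
  ring

lemma charFunPair_le (h : IsHomogeneousSelfSimilar ρ a p μ) (t : ℝ) :
    charFunPair ρ μ t ≤ charFunPair ρ μ (ρ * t) := by
  rw [h.charFunPair_eq t]
  exact mul_le_of_le_one_left (charFunPair_nonneg _ _ _)
    (mul_le_one₀ (h.norm_digitCharFun_le t) (norm_nonneg _) (h.norm_digitCharFun_le _))

lemma sq_norm_charFun_le (h : IsHomogeneousSelfSimilar ρ a p μ) (t : ℝ) :
    ‖charFun μ t‖ ^ 2 ≤ charFunPair ρ μ t := by
  rw [sq, charFunPair]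
  gcongr
  rw [h.charFun_eq t, norm_mul]
  exact mul_le_of_le_one_left (norm_nonneg _) (h.norm_digitCharFun_le t)

lemma exists_charFunPair_le_mul (h : IsHomogeneousSelfSimilar ρ a p μ) (hρ : 0 < ρ) {j k : ι}
    (hjk : a j ≠ a k) :
    ∃ κ, 0 ≤ κ ∧ κ < 1 ∧ ∀ x, round x ≠ round (ρ⁻¹ * round (ρ * x)) →
      charFunPair ρ μ (2 * π * x / (a j - a k)) ≤
        κ * charFunPair ρ μ (ρ * (2 * π * x / (a j - a k))) := by
  set τ : ℝ := (2 * (1 + ρ⁻¹))⁻¹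
  have : 0 < τ := by positivity
  have hp : 0 < p j * p k := mul_pos (h.weight_pos j) (h.weight_pos k)
  set κ : ℝ := √(1 - 16 * (p j * p k) * τ ^ 2)
  have hdigit : ∀ x : ℝ, τ ≤ |x - round x| → ‖digitCharFun a p (2 * π * x / (a j - a k))‖ ≤ κ := by
    intro x hx
    refine (le_abs_self _).trans (Real.abs_le_sqrt ((sq_norm_digitCharFun_two_pi_mul_div_le
      (fun l ↦ (h.weight_pos l).le) h.sum_weight hjk x).trans ?_))
    rw [← sq_abs (x - round x)]
    gcongr
  have hκ1 : κ < 1 := by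
    rw [Real.sqrt_lt' one_pos, one_pow, sub_lt_self_iff]
    positivity
  refine ⟨κ, Real.sqrt_nonneg _, hκ1, fun x hx ↦ ?_⟩
  rw [h.charFunPair_eq]
  refine mul_le_mul_of_nonneg_right ?_ (charFunPair_nonneg _ _ _)
  rcases le_abs_sub_round_or_of_round_ne hρ hx with hτx | hτx
  · exact (mul_le_of_le_one_right (norm_nonneg _) (h.norm_digitCharFun_le _)).trans (hdigit x hτx)
  · have hscale : ρ * (2 * π * x / (a j - a k)) = 2 * π * (ρ * x) / (a j - a k) := by ring
    rw [hscale]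
    exact (mul_le_of_le_one_left (norm_nonneg _) (h.norm_digitCharFun_le _)).trans
      (hdigit (ρ * x) hτx)

end FiniteMeasure

variable [IsProbabilityMeasure μ]

lemma exists_measureReal_round_eq_le (h : IsHomogeneousSelfSimilar ρ a p μ) (hρ0 : 0 < ρ)
    (hρ1 : ρ < 1) {K : Set ℝ} (hKc : IsCompact K) (hsupp : ∀ᵐ x ∂μ, x ∈ K)
    (hsep : IsStronglySeparated ρ a K)
    {β : ℝ} (hβ : ∀ j, p j ≤ β) (hβ1 : β ≤ 1) {c : ℝ} (hc : 0 < c) :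
    ∃ C > 0, ∀ (N : ℕ) (u : ℝ → ℝ), (∀ x ∈ K, ∀ y ∈ K, c * |x - y| ≤ ρ ^ N * |u x - u y|) →
      ∀ n : ℤ, μ.real {x | round (u x) = n} ≤ C * β ^ N := by
  obtain ⟨C, hC0, hC⟩ := h.exists_measureReal_le_of_dist_le hρ0 hρ1 hKc hsupp hsep hβ hβ1 c⁻¹
  refine ⟨C, hC0, fun N u hu n ↦ hC N _ fun x ⟨hxK, hx⟩ y ⟨hyK, hy⟩ ↦ ?_⟩
  have hclose : |u x - u y| ≤ 1 := by
    calc |u x - u y| ≤ |u x - n| + |n - u y| := abs_sub_le _ _ _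
      _ ≤ 1 / 2 + 1 / 2 := by
        rw [abs_sub_comm (n : ℝ)]
        exact add_le_add (hx ▸ abs_sub_round (u x)) (hy ▸ abs_sub_round (u y))
      _ = 1 := by norm_num
  rw [Real.dist_eq, le_inv_mul_iff₀ hc]
  exact (hu x hxK y hyK).trans (mul_le_of_le_one_right (by positivity) hclose)

lemma integral_charFunPair_pow_le (h : IsHomogeneousSelfSimilar ρ a p μ) (hρ : 0 < ρ)
    {d κ R α : ℝ} (hd : d ≠ 0) (hκ0 : 0 ≤ κ)
    (hκ : ∀ x, round x ≠ round (ρ⁻¹ * round (ρ * x)) →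
      charFunPair ρ μ (2 * π * x / d) ≤ κ * charFunPair ρ μ (ρ * (2 * π * x / d)))
    (hR : 0 ≤ R) {N : ℕ} {v : ℝ → ℝ} (hv : Measurable v)
    (hvR : ∀ᵐ y ∂μ, |ρ ^ N * (d / (2 * π) * v y)| ≤ R)
    (hα : ∀ n, μ.real {y | round (d / (2 * π) * v y) = n} ≤ α) (Q : ℕ) :
    ∫ y, charFunPair ρ μ (v y) ^ Q ∂μ ≤ α * ((2 * R + 2) * (1 + (ρ⁻¹ + 2) * κ ^ Q) ^ N) := by
  have hscale : ∀ x, 2 * π * (ρ * x) / d = ρ * (2 * π * x / d) := fun x ↦ by ring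
  have hv_eq : ∀ y, 2 * π * (d / (2 * π) * v y) / d = v y := fun y ↦ by field_simp
  have hbound := integral_comp_le_mul_pow (f := fun x ↦ charFunPair ρ μ (2 * π * x / d) ^ Q) hρ
    (pow_nonneg hκ0 Q) hR
    (((continuous_charFunPair ρ μ).comp (by fun_prop)).pow Q).measurable
    (fun x ↦ pow_nonneg (charFunPair_nonneg _ _ _) Q)
    (fun x ↦ pow_le_one₀ (charFunPair_nonneg _ _ _) (charFunPair_le_one _ _ _))
    (fun x ↦ by
      rw [hscale]
      exact pow_le_pow_left₀ (charFunPair_nonneg _ _ _) (h.charFunPair_le _) Q)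
    (fun x hx ↦ by
      rw [hscale, ← mul_pow]
      exact pow_le_pow_left₀ (charFunPair_nonneg _ _ _) (hκ x hx) Q)
    (hv.const_mul _) hvR hα
  simpa only [hv_eq] using hbound

lemma exists_integral_charFunPair_pow_le (h : IsHomogeneousSelfSimilar ρ a p μ) (hρ0 : 0 < ρ)
    (hρ1 : ρ < 1) {K : Set ℝ} (hKc : IsCompact K) (hsupp : ∀ᵐ x ∂μ, x ∈ K)
    (hsep : IsStronglySeparated ρ a K)
    {j k : ι} (hjk : a j ≠ a k) {c L : ℝ} (hc : 0 < c) (hL : 0 ≤ L) :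
    ∃ Q ≠ 0, ∃ θ, 0 < θ ∧ θ < 1 ∧ ∃ C > 0, ∀ (N : ℕ) (v : ℝ → ℝ), Continuous v →
      (∀ x ∈ K, ∀ y ∈ K, c * |x - y| ≤ ρ ^ N * |v x - v y|) → (∀ x ∈ K, ρ ^ N * |v x| ≤ L) →
      ∫ x, charFunPair ρ μ (v x) ^ Q ∂μ ≤ C * θ ^ N := by
  have : Nontrivial ι := ⟨j, k, ne_of_apply_ne a hjk⟩
  have hd : a j - a k ≠ 0 := sub_ne_zero.2 hjk
  set q : ℝ := (a j - a k) / (2 * π)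
  have hq : 0 < |q| := abs_pos.2 (div_ne_zero hd two_pi_pos.ne')
  obtain ⟨β, hβ1, hβ⟩ := exists_lt_one_forall_le h.weight_pos h.sum_weight
  have hβ0 : 0 < β := (h.weight_pos j).trans_le (hβ j)
  obtain ⟨κ, hκ0, hκ1, hκ⟩ := h.exists_charFunPair_le_mul hρ0 hjk
  obtain ⟨C, hC0, hC⟩ := h.exists_measureReal_round_eq_le hρ0 hρ1 hKc hsupp hsep hβ hβ1.le
    (mul_pos hq hc)
  obtain ⟨Q, hQlt, hQ0⟩ : ∃ Q : ℕ, β * (1 + (ρ⁻¹ + 2) * κ ^ Q) < 1 ∧ Q ≠ 0 := by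
    have hlim : Tendsto (fun Q : ℕ ↦ β * (1 + (ρ⁻¹ + 2) * κ ^ Q)) atTop
        (𝓝 (β * (1 + (ρ⁻¹ + 2) * 0))) :=
      (((tendsto_pow_atTop_nhds_zero_of_lt_one hκ0 hκ1).const_mul _).const_add _).const_mul _
    exact ((hlim.eventually_lt_const (by simpa using hβ1)).and (eventually_ne_atTop 0)).exists
  refine ⟨Q, hQ0, β * (1 + (ρ⁻¹ + 2) * κ ^ Q), by positivity, hQlt,
    C * (2 * (|q| * L) + 2), by positivity, fun N v hv hexp hvL ↦ ?_⟩
  have hexp' : ∀ x ∈ K, ∀ y ∈ K, |q| * c * |x - y| ≤ ρ ^ N * |q * v x - q * v y| := by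
    intro x hx y hy
    rw [← mul_sub, abs_mul, mul_assoc, mul_left_comm (ρ ^ N)]
    exact mul_le_mul_of_nonneg_left (hexp x hx y hy) (abs_nonneg q)
  have hvR : ∀ᵐ y ∂μ, |ρ ^ N * (q * v y)| ≤ |q| * L := hsupp.mono fun y hy ↦ by
    rw [abs_mul, abs_mul, abs_of_pos (pow_pos hρ0 N), mul_left_comm]
    exact mul_le_mul_of_nonneg_left (hvL y hy) (abs_nonneg q)
  refine (h.integral_charFunPair_pow_le hρ0 hd hκ0 hκ (by positivity) hv.measurable hvR
    (hC N _ hexp') Q).trans_eq ?_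
  rw [mul_pow]
  ring

lemma exists_integral_norm_charFun_le (h : IsHomogeneousSelfSimilar ρ a p μ) (hρ0 : 0 < ρ)
    (hρ1 : ρ < 1) {K : Set ℝ} (hKc : IsCompact K) (hsupp : ∀ᵐ x ∂μ, x ∈ K)
    (hsep : IsStronglySeparated ρ a K)
    {j k : ι} (hjk : a j ≠ a k) {c L : ℝ} (hc : 0 < c) (hL : 0 ≤ L) :
    ∃ ω, 0 < ω ∧ ω < 1 ∧ ∃ C > 0, ∀ (N : ℕ) (v : ℝ → ℝ), Continuous v →
      (∀ x ∈ K, ∀ y ∈ K, c * |x - y| ≤ ρ ^ N * |v x - v y|) → (∀ x ∈ K, ρ ^ N * |v x| ≤ L) →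
      ∫ x, ‖charFun μ (v x)‖ ∂μ ≤ C * ω ^ N := by
  obtain ⟨Q, hQ0, θ, hθ0, hθ1, C, hC0, hC⟩ :=
    h.exists_integral_charFunPair_pow_le hρ0 hρ1 hKc hsupp hsep hjk hc hL
  have hn0 : 2 * Q ≠ 0 := by positivity
  have hr : 0 < ((2 * Q : ℕ) : ℝ)⁻¹ := by positivity
  refine ⟨θ ^ ((2 * Q : ℕ) : ℝ)⁻¹, by positivity, Real.rpow_lt_one hθ0.le hθ1 hr,
    C ^ ((2 * Q : ℕ) : ℝ)⁻¹, by positivity, fun N v hv hexp hvL ↦ ?_⟩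
  have hcont : Continuous fun x ↦ ‖charFun μ (v x)‖ := by fun_prop
  have hint : ∀ {f : ℝ → ℝ}, Continuous f → Integrable f μ := fun hf ↦
    integrable_of_continuousOn_of_ae_mem hf.continuousOn hKc hsupp
  refine le_of_pow_le_pow_left₀ hn0 (by positivity) ?_
  calc (∫ x, ‖charFun μ (v x)‖ ∂μ) ^ (2 * Q) ≤ ∫ x, ‖charFun μ (v x)‖ ^ (2 * Q) ∂μ :=
        (convexOn_pow _).map_integral_le (by fun_prop) isClosed_Ici
          (ae_of_all _ fun x ↦ norm_nonneg _) (hint hcont) (hint (hcont.pow _))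
    _ ≤ ∫ x, charFunPair ρ μ (v x) ^ Q ∂μ := by
        refine integral_mono (hint (hcont.pow _))
          (hint (((continuous_charFunPair ρ μ).comp hv).pow Q)) fun x ↦ ?_
        simp only [pow_mul]
        gcongr
        exact h.sq_norm_charFun_le _
    _ ≤ C * θ ^ N := hC N v hv hexp hvL
    _ = (C ^ ((2 * Q : ℕ) : ℝ)⁻¹ * (θ ^ ((2 * Q : ℕ) : ℝ)⁻¹) ^ N) ^ (2 * Q) := by
        rw [mul_pow, Real.rpow_inv_natCast_pow hC0.le hn0, ← pow_mul, mul_comm N, pow_mul,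
          Real.rpow_inv_natCast_pow hθ0.le hn0]

end IsHomogeneousSelfSimilar

lemma isCompact_convexHull_of_isCompact {K : Set ℝ} (hK : IsCompact K) :
    IsCompact (convexHull ℝ K) := by
  rcases K.eq_empty_or_nonempty with rfl | hKne
  · simp
  suffices hIcc : convexHull ℝ K = Icc (sInf K) (sSup K) from hIcc ▸ isCompact_Icc
  refine Subset.antisymm (convexHull_min (fun x hx ↦ ?_) (convex_Icc _ _)) ?_
  · exact ⟨csInf_le hK.bddBelow hx, le_csSup hK.bddAbove hx⟩
  · exact (convex_convexHull ℝ K).ordConnected.out (subset_convexHull ℝ K (hK.sInf_mem hKne))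
      (subset_convexHull ℝ K (hK.sSup_mem hKne))

lemma norm_integral_cexp_affine (μ : Measure ℝ) (A B : ℝ) :
    ‖∫ x, Complex.exp ((A + B * x : ℝ) * Complex.I) ∂μ‖ = ‖charFun μ B‖ := by
  have hsplit : ∀ x : ℝ, Complex.exp ((A + B * x : ℝ) * Complex.I) =
      Complex.exp (A * Complex.I) * Complex.exp (B * x * Complex.I) := by
    intro x
    rw [← Complex.exp_add]
    push_cast
    ring_nf
  simp only [hsplit]
  rw [integral_const_mul, norm_mul, Complex.norm_exp_ofReal_mul_I, one_mul, charFun_apply_real]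

lemma norm_integral_cexp_mul_le_add_charFun {μ : Measure ℝ} [IsProbabilityMeasure μ] {θ g : ℝ → ℝ}
    {A B g₀ ε η : ℝ} (hint : Integrable (fun x ↦ Complex.exp (θ x * Complex.I) * (g x : ℂ)) μ)
    (hθ : ∀ᵐ x ∂μ, |A + B * x - θ x| ≤ ε) (hg : ∀ᵐ x ∂μ, |g₀ - g x| ≤ η) :
    ‖∫ x, Complex.exp (θ x * Complex.I) * (g x : ℂ) ∂μ‖ ≤
      ε * |g₀| + η + |g₀| * ‖charFun μ B‖ := by
  have hint₀ : Integrable (fun x : ℝ ↦ Complex.exp ((A + B * x : ℝ) * Complex.I) * (g₀ : ℂ)) μ :=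
    .of_bound (by fun_prop) |g₀| (ae_of_all _ fun x ↦ by
      rw [norm_mul, Complex.norm_exp_ofReal_mul_I, one_mul, Complex.norm_real, Real.norm_eq_abs])
  have hdiff : ‖∫ x, (Complex.exp ((A + B * x : ℝ) * Complex.I) * (g₀ : ℂ) -
      Complex.exp (θ x * Complex.I) * (g x : ℂ)) ∂μ‖ ≤ ε * |g₀| + η := by
    refine (norm_integral_le_of_norm_le_const (C := ε * |g₀| + η) ?_).trans_eq (by simp)
    filter_upwards [hθ, hg] with x hθx hgx
    refine (norm_cexp_mul_sub_cexp_mul_le _ _ _ _).trans ?_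
    gcongr
  have hmain : ‖∫ x, Complex.exp ((A + B * x : ℝ) * Complex.I) * (g₀ : ℂ) ∂μ‖ =
      |g₀| * ‖charFun μ B‖ := by
    rw [integral_mul_const, norm_mul, norm_integral_cexp_affine, Complex.norm_real,
      Real.norm_eq_abs, mul_comm]
  rw [integral_sub hint₀ hint] at hdiff
  rw [← hmain]
  exact (norm_le_norm_sub_add _ _).trans (by rw [norm_sub_rev]; gcongr)

section Linearization

variable {μ : Measure ℝ} [IsProbabilityMeasure μ] {K : Set ℝ} {φ g : ℝ → ℝ} {M L : ℝ≥0} {B : ℝ}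

lemma norm_integral_cexp_comp_affine_le (hKc : IsCompact K) (hsupp : ∀ᵐ x ∂μ, x ∈ K)
    (hφ : Differentiable ℝ φ) (hM : LipschitzOnWith M (deriv φ) (convexHull ℝ K))
    (hg : Continuous g) (hL : LipschitzOnWith L g K) (hB : ∀ x ∈ K, |g x| ≤ B) {r b : ℝ}
    (hr : 0 ≤ r) (hb : MapsTo (fun x ↦ r * x + b) K K) (s : ℝ) {z : ℝ} (hz : z ∈ K) :
    ‖∫ x, Complex.exp (s * φ (r * x + b) * Complex.I) * (g (r * x + b) : ℂ) ∂μ‖ ≤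
      |s| * (M * (r * Metric.diam K) ^ 2) * B + L * (r * Metric.diam K) +
        B * ‖charFun μ (s * r * deriv φ (r * z + b))‖ := by
  have hφc : Continuous φ := hφ.continuous
  set y : ℝ := r * z + b with hy
  have hyK : y ∈ K := hb hz
  have hdist : ∀ x ∈ K, |r * x + b - y| ≤ r * Metric.diam K := fun x hx ↦ by
    rw [hy, add_sub_add_right_eq_sub, ← mul_sub, abs_mul, abs_of_nonneg hr]
    gcongr
    exact Metric.dist_le_diam_of_mem hKc.isBounded hx hz
  have hphase : ∀ᵐ x ∂μ, |s * (φ y + deriv φ y * (b - y)) + s * r * deriv φ y * x -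
      s * φ (r * x + b)| ≤ |s| * (M * (r * Metric.diam K) ^ 2) := hsupp.mono fun x hx ↦ by
    have htaylor := abs_sub_sub_deriv_mul_le hφ (convex_convexHull ℝ K) hM
      (subset_convexHull ℝ K hyK) (subset_convexHull ℝ K (hb hx))
    calc |s * (φ y + deriv φ y * (b - y)) + s * r * deriv φ y * x - s * φ (r * x + b)|
        = |s| * |φ (r * x + b) - φ y - deriv φ y * (r * x + b - y)| := by
          rw [abs_sub_comm, ← abs_mul]
          ring_nf
      _ ≤ |s| * (M * |r * x + b - y| ^ 2) := by
          rw [sq_abs]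
          gcongr
      _ ≤ |s| * (M * (r * Metric.diam K) ^ 2) := by
          gcongr
          exact hdist x hx
  have hamp : ∀ᵐ x ∂μ, |g y - g (r * x + b)| ≤ L * (r * Metric.diam K) :=
    hsupp.mono fun x hx ↦ by
      rw [abs_sub_comm]
      exact (hL.norm_sub_le (hb hx) hyK).trans
        (mul_le_mul_of_nonneg_left (hdist x hx) L.coe_nonneg)
  have hlocal := norm_integral_cexp_mul_le_add_charFun (θ := fun x ↦ s * φ (r * x + b))
    (g := fun x ↦ g (r * x + b))
    (integrable_of_continuousOn_of_ae_mem (by fun_prop) hKc hsupp) hphase hamp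
  push_cast at hlocal
  have hgy := hB y hyK
  refine hlocal.trans ?_
  gcongr

end Linearization

lemma linearization_error_le {ρ S T M B L d : ℝ} {N : ℕ} (hρ0 : 0 ≤ ρ) (hρ1 : ρ ≤ 1)
    (hM : 0 ≤ M) (hB : 0 ≤ B) (hL : 0 ≤ L) (hd : 0 ≤ d) (hS : S * ρ ^ (3 * N) ≤ T) :
    S * (M * (ρ ^ (2 * N) * d) ^ 2) * B + L * (ρ ^ (2 * N) * d) ≤
      (T * (M * d ^ 2) * B + L * d) * ρ ^ N := by
  have hpow : ρ ^ (2 * N) ≤ ρ ^ N := pow_le_pow_of_le_one hρ0 hρ1 (by omega)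
  calc S * (M * (ρ ^ (2 * N) * d) ^ 2) * B + L * (ρ ^ (2 * N) * d)
      = S * ρ ^ (3 * N) * (M * d ^ 2 * B * ρ ^ N) + L * d * ρ ^ (2 * N) := by ring
    _ ≤ T * (M * d ^ 2 * B * ρ ^ N) + L * d * ρ ^ N := by gcongr
    _ = (T * (M * d ^ 2) * B + L * d) * ρ ^ N := by ring

namespace IsHomogeneousSelfSimilar

variable {ι : Type*} [Fintype ι] {ρ : ℝ} {a p : ι → ℝ} {μ : Measure ℝ} [IsProbabilityMeasure μ]
  {K : Set ℝ} {φ g : ℝ → ℝ}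

lemma norm_integral_cexp_mul_le (h : IsHomogeneousSelfSimilar ρ a p μ) (hρ : 0 ≤ ρ)
    (hKc : IsCompact K) (hK : ∀ j, MapsTo (fun x ↦ ρ * x + a j) K K)
    (hsupp : ∀ᵐ x ∂μ, x ∈ K) (hφ : ContDiff ℝ 1 φ) {M L : ℝ≥0}
    (hM : LipschitzOnWith M (deriv φ) (convexHull ℝ K)) (hg : Continuous g)
    (hL : LipschitzOnWith L g K) {B : ℝ} (hB : ∀ x ∈ K, |g x| ≤ B) (s : ℝ) (n : ℕ) :
    ‖∫ x, Complex.exp (s * φ x * Complex.I) * (g x : ℂ) ∂μ‖ ≤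
      |s| * (M * (ρ ^ n * Metric.diam K) ^ 2) * B + L * (ρ ^ n * Metric.diam K) +
        B * ∫ y, ‖charFun μ (s * ρ ^ n * deriv φ y)‖ ∂μ := by
  have hφc : Continuous φ := hφ.continuous
  have : Continuous (deriv φ) := hφ.continuous_deriv le_rfl
  refine (h.norm_integral_le_integral hKc hK hsupp n
    (F := fun x ↦ Complex.exp (s * φ x * Complex.I) * (g x : ℂ))
    (G := fun y ↦ |s| * (M * (ρ ^ n * Metric.diam K) ^ 2) * B + L * (ρ ^ n * Metric.diam K) +
      B * ‖charFun μ (s * ρ ^ n * deriv φ y)‖)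
    (by fun_prop) (by fun_prop) fun b hb z hz ↦
      norm_integral_cexp_comp_affine_le hKc hsupp (hφ.differentiable one_ne_zero) hM hg hL hB
        (pow_nonneg hρ n) hb s hz).trans_eq ?_
  rw [integral_add (integrable_const _)
    (integrable_of_continuousOn_of_ae_mem (by fun_prop) hKc hsupp), integral_const_mul]
  simp

lemma exists_integral_norm_charFun_mul_le (h : IsHomogeneousSelfSimilar ρ a p μ) (hρ0 : 0 < ρ)
    (hρ1 : ρ < 1) (hKc : IsCompact K) (hsupp : ∀ᵐ x ∂μ, x ∈ K) (hsep : IsStronglySeparated ρ a K)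
    {j k : ι} (hjk : a j ≠ a k) {f : ℝ → ℝ} (hf : ContDiff ℝ 1 f)
    (hf' : ∀ t ∈ convexHull ℝ K, deriv f t ≠ 0) {T : ℝ} (hT : 0 ≤ T) :
    ∃ ω, 0 < ω ∧ ω < 1 ∧ ∃ C > 0, ∀ (N : ℕ) (t : ℝ), 1 ≤ |t| * ρ ^ N → |t| * ρ ^ N ≤ T →
      ∫ y, ‖charFun μ (t * f y)‖ ∂μ ≤ C * ω ^ N := by
  obtain ⟨x₀, hx₀⟩ : K.Nonempty := hsupp.exists
  obtain ⟨c, hc, hexp⟩ := exists_pos_mul_abs_sub_le_abs_sub hf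
    (isCompact_convexHull_of_isCompact hKc) (convex_convexHull ℝ K) hf'
  obtain ⟨D, hD⟩ := hKc.exists_bound_of_continuousOn hf.continuous.continuousOn
  have hD0 : 0 ≤ D := (norm_nonneg _).trans (hD x₀ hx₀)
  obtain ⟨ω, hω0, hω1, C, hC0, hC⟩ := h.exists_integral_norm_charFun_le hρ0 hρ1 hKc hsupp hsep hjk
    hc (mul_nonneg hT hD0)
  have hscale : ∀ (N : ℕ) (t x : ℝ), ρ ^ N * |t * x| = |t| * ρ ^ N * |x| := fun N t x ↦ by
    rw [abs_mul]
    ring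
  refine ⟨ω, hω0, hω1, C, hC0, fun N t ht htT ↦ hC N _ (hf.continuous.const_mul t)
    (fun x hx y hy ↦ ?_) fun x hx ↦ ?_⟩
  · rw [← mul_sub, hscale]
    exact (hexp x (subset_convexHull ℝ K hx) y (subset_convexHull ℝ K hy)).trans
      (le_mul_of_one_le_left (abs_nonneg _) ht)
  · rw [hscale]
    exact mul_le_mul htT (hD x hx) (abs_nonneg _) hT

lemma exists_norm_integral_cexp_mul_le_pow (h : IsHomogeneousSelfSimilar ρ a p μ) (hρ0 : 0 < ρ)
    (hρ1 : ρ < 1) (hKc : IsCompact K) (hK : ∀ j, MapsTo (fun x ↦ ρ * x + a j) K K)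
    (hsupp : ∀ᵐ x ∂μ, x ∈ K) (hsep : IsStronglySeparated ρ a K)
    {j k : ι} (hjk : a j ≠ a k) (hφ : ContDiff ℝ 2 φ)
    (hφ'' : ∀ t ∈ convexHull ℝ K, deriv (deriv φ) t ≠ 0) (hg : ContDiff ℝ 1 g) {T : ℝ}
    (hT : 0 ≤ T) :
    ∃ ω, 0 < ω ∧ ω < 1 ∧ ∃ C > 0, ∀ (N : ℕ) (s : ℝ), 1 ≤ |s| * ρ ^ (3 * N) →
      |s| * ρ ^ (3 * N) ≤ T →
      ‖∫ x, Complex.exp (s * φ x * Complex.I) * (g x : ℂ) ∂μ‖ ≤ C * ω ^ N := by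
  obtain ⟨x₀, hx₀⟩ : K.Nonempty := hsupp.exists
  have hφ' : ContDiff ℝ 1 (deriv φ) := hφ.deriv'
  obtain ⟨M, hM⟩ := hφ'.locallyLipschitz.locallyLipschitzOn.exists_lipschitzOnWith_of_compact
    (isCompact_convexHull_of_isCompact hKc)
  obtain ⟨L, hL⟩ := hg.locallyLipschitz.locallyLipschitzOn.exists_lipschitzOnWith_of_compact hKc
  obtain ⟨B, hB⟩ := hKc.exists_bound_of_continuousOn hg.continuous.continuousOn
  have hB0 : 0 ≤ B := (norm_nonneg _).trans (hB x₀ hx₀)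
  obtain ⟨ω, hω0, hω1, C, hC0, hC⟩ := h.exists_integral_norm_charFun_mul_le hρ0 hρ1 hKc hsupp hsep
    hjk hφ' hφ'' hT
  set A : ℝ := T * (M * Metric.diam K ^ 2) * B + L * Metric.diam K
  have : 0 ≤ A := by positivity
  refine ⟨max ρ ω, lt_max_of_lt_left hρ0, max_lt hρ1 hω1, A + B * C + 1, by positivity,
    fun N s hs hsT ↦ ?_⟩
  have habs : |s * ρ ^ (2 * N)| * ρ ^ N = |s| * ρ ^ (3 * N) := by
    rw [abs_mul, abs_of_pos (pow_pos hρ0 _)]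
    ring
  calc ‖∫ x, Complex.exp (s * φ x * Complex.I) * (g x : ℂ) ∂μ‖
      ≤ |s| * (M * (ρ ^ (2 * N) * Metric.diam K) ^ 2) * B + L * (ρ ^ (2 * N) * Metric.diam K) +
          B * ∫ y, ‖charFun μ (s * ρ ^ (2 * N) * deriv φ y)‖ ∂μ :=
        h.norm_integral_cexp_mul_le hρ0.le hKc hK hsupp (hφ.of_le one_le_two) hM hg.continuous hL
          hB s (2 * N)
    _ ≤ A * ρ ^ N + B * (C * ω ^ N) := by
        gcongr
        · exact linearization_error_le hρ0.le hρ1.le (by positivity) hB0 (by positivity)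
            Metric.diam_nonneg hsT
        · exact hC N _ (habs ▸ hs) (habs ▸ hsT)
    _ ≤ A * max ρ ω ^ N + B * (C * max ρ ω ^ N) := by
        gcongr
        · exact le_max_left _ _
        · exact le_max_right _ _
    _ ≤ (A + B * C + 1) * max ρ ω ^ N := by
        have : 0 ≤ max ρ ω ^ N := by positivity
        linarith

lemma exists_norm_integral_cexp_mul_le_rpow (h : IsHomogeneousSelfSimilar ρ a p μ) (hρ0 : 0 < ρ)
    (hρ1 : ρ < 1) (hKc : IsCompact K) (hK : ∀ j, MapsTo (fun x ↦ ρ * x + a j) K K)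
    (hsupp : ∀ᵐ x ∂μ, x ∈ K)
    (hsep : IsStronglySeparated ρ a K)
    {j k : ι} (hjk : a j ≠ a k) (hφ : ContDiff ℝ 2 φ)
    (hφ'' : ∀ t ∈ convexHull ℝ K, deriv (deriv φ) t ≠ 0) (hg : ContDiff ℝ 1 g) :
    ∃ γ > (0 : ℝ), ∃ C > (0 : ℝ), ∀ s : ℝ, 1 ≤ |s| →
      ‖∫ x, Complex.exp (s * φ x * Complex.I) * (g x : ℂ) ∂μ‖ ≤ C * |s| ^ (-γ) := by
  obtain ⟨ω, hω0, hω1, C, hC0, hC⟩ := h.exists_norm_integral_cexp_mul_le_pow hρ0 hρ1 hKc hK hsupp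
    hsep hjk hφ hφ'' hg (inv_nonneg.2 (pow_nonneg hρ0.le 3))
  obtain ⟨γ, hγ, C', hC'0, hC'⟩ := exists_pow_le_mul_rpow_neg hω0 hω1 (pow_pos hρ0 3)
    (pow_lt_one₀ hρ0.le hρ1 three_ne_zero)
  refine ⟨γ, hγ, C * C', mul_pos hC0 hC'0, fun s hs ↦ ?_⟩
  obtain ⟨N, hN1, hN2, hN3⟩ := hC' |s| hs
  rw [← pow_mul] at hN1 hN2
  calc ‖∫ x, Complex.exp (s * φ x * Complex.I) * (g x : ℂ) ∂μ‖ ≤ C * ω ^ N := hC N s hN1 hN2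
    _ ≤ C * (C' * |s| ^ (-γ)) := by gcongr
    _ = C * C' * |s| ^ (-γ) := by ring

end IsHomogeneousSelfSimilar

theorem stmt0_general {ι : Type*} [Fintype ι] [Nontrivial ι] {ρ : ℝ} (hρ0 : 0 < ρ) (hρ1 : ρ < 1)
    {a p : ι → ℝ} {μ : Measure ℝ} [IsProbabilityMeasure μ]
    (hμ : IsHomogeneousSelfSimilar ρ a p μ) {K : Set ℝ} (hKc : IsCompact K) (hKne : K.Nonempty)
    (hK : ∀ j, MapsTo (fun x ↦ ρ * x + a j) K K) (hsep : IsStronglySeparated ρ a K)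
    {φ g : ℝ → ℝ} (hφ : ContDiff ℝ 2 φ) (hφ'' : ∀ t ∈ convexHull ℝ K, deriv (deriv φ) t ≠ 0)
    (hg : ContDiff ℝ 1 g) :
    ∃ γ > (0 : ℝ), ∃ C > (0 : ℝ), ∀ ξ : ℝ, 1 ≤ |ξ| →
      ‖∫ t, Complex.exp (2 * π * Complex.I * ξ * φ t) * (g t : ℂ) ∂μ‖ ≤ C * |ξ| ^ (-γ) := by
  have hsupp := hμ.ae_mem hρ0.le hρ1 hKc.isClosed hKne hK
  obtain ⟨j, k, hjk⟩ := exists_pair_ne ι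
  have ha : a j ≠ a k := fun ha ↦ by
    have hdisj := hsep j k hjk
    rw [ha, disjoint_self] at hdisj
    exact (hKne.image _).ne_empty hdisj
  obtain ⟨γ, hγ, C, hC0, hC⟩ := hμ.exists_norm_integral_cexp_mul_le_rpow hρ0 hρ1 hKc hK hsupp hsep
    ha hφ hφ'' hg
  refine ⟨γ, hγ, C, hC0, fun ξ hξ ↦ ?_⟩
  have hle : |ξ| ≤ |2 * π * ξ| := by
    rw [abs_mul, abs_of_pos two_pi_pos]
    exact le_mul_of_one_le_left (abs_nonneg ξ) (by linarith [pi_gt_three])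
  have hphase : ∀ t, 2 * π * Complex.I * ξ * φ t = ((2 * π * ξ : ℝ) : ℂ) * φ t * Complex.I := by
    intro t
    push_cast
    ring
  simp only [hphase]
  calc _ ≤ C * |2 * π * ξ| ^ (-γ) := hC _ (hξ.trans hle)
    _ ≤ C * |ξ| ^ (-γ) := mul_le_mul_of_nonneg_left
      (Real.rpow_le_rpow_of_nonpos (one_pos.trans_le hξ) hle (neg_nonpos.2 hγ.le)) hC0.le

end Decay

/-- power Fourier decay of oscillatory integrals against the homogeneous
self-similar measure, for a `C²` phase with positive second derivative and a `C¹` amplitude. -/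
theorem stmt0
    (m : ℕ) (hm : 2 ≤ m) (ρ : ℝ) (hρ0 : 0 < ρ) (hρ1 : ρ < 1)
    (a : Fin m → ℝ) (p : Fin m → ℝ) (hp : ∀ j, 0 < p j) (hp1 : ∑ j, p j = 1)
    (μ : Measure ℝ) [IsProbabilityMeasure μ]
    (hμ : μ = ∑ j : Fin m, ENNReal.ofReal (p j) • Measure.map (fun x => ρ * x + a j) μ)
    (K : Set ℝ) (hKc : IsCompact K) (hKne : K.Nonempty)
    (hKattr : K = ⋃ j : Fin m, (fun x => ρ * x + a j) '' K)
    (hsep : ∀ j j' : Fin m, j ≠ j' →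
      Disjoint ((fun x => ρ * x + a j) '' K) ((fun x => ρ * x + a j') '' K))
    (φ : ℝ → ℝ) (hφ : ContDiff ℝ 2 φ) (hφ'' : ∀ t, 0 < deriv (deriv φ) t)
    (g : ℝ → ℝ) (hg : ContDiff ℝ 1 g) :
    ∃ γ > (0 : ℝ), ∃ C > (0 : ℝ), ∀ ξ : ℝ, 1 ≤ |ξ| →
      ‖∫ t, Complex.exp (2 * Real.pi * Complex.I * ξ * φ t) * (g t : ℂ) ∂μ‖
        ≤ C * |ξ| ^ (-γ) := by
  have : Nontrivial (Fin m) := Fin.nontrivial_iff_two_le.2 hm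
  exact stmt0_general hρ0 hρ1 ⟨hp, hp1, hμ⟩ hKc hKne
    (fun j x hx ↦ hKattr.symm.subset (Set.mem_iUnion.2 ⟨j, x, hx, rfl⟩)) hsep hφ
    (fun t _ ↦ (hφ'' t).ne') hg
end

section
/- Let m ≥ 2, ρ ∈ (0,1), a_1,…,a_m ∈ ℝ and let p = (p_1,…,p_m) be a probability vector with every p_j > 0. Let μ_ρ be the homogeneous self-similar measure of the IFS {f_j(x) = ρx + a_j}_{j=1}^m, and assume the IFS satisfies the strong separation condition. Then for every φ ∈ C²(ℝ) with φ''(t) > 0 for all t, there exist constants γ > 0 and C > 0 such that the pushforward measure φ_*μ_ρ satisfies |(φ_*μ_ρ)^∧(ξ)| ≤ C|ξ|^{−γ} for all ξ with |ξ| ≥ 1. -/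
open MeasureTheory Real

/-!
For `|ξ|` of order `|ρ|⁻¹ ^ (3 * k)`, cut `μ` into cylinders of generation `2 * k`. On each of them
`ξ φ` is affine up to an error of order `|ρ| ^ k`, and averaging over the base point of the
linearisation bounds the oscillatory integral by `∫ ‖μ̂ (T φ' x)‖ dμ(x)` with `|T|` of order
`|ρ|⁻¹ ^ k`. Since `φ'` is bi-Lipschitz on the support and `μ` has a positive Frostman exponent, the
image `ν` of `μ` under `T φ'` gives every ball of unit size mass at most a constant times `P ^ k`
for some `P < 1`. On the other hand `μ̂ t = m t * μ̂ (ρ t)`, where the trigonometric polynomial `m`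
has modulus bounded away from `1` off a sparse set, so `∫ ‖μ̂‖ ^ q dν` loses at most a factor
`β ^ k` against that mass, where `β > 1` is as close to `1` as desired once `q` is large. Choosing
`β * P < 1` and applying Jensen's inequality gives the decay.
-/

open Set Filter Metric
open scoped Topology NNReal ENNReal

lemma norm_exp_ofReal_mul_I_sub (x y : ℝ) :
    ‖Complex.exp (x * Complex.I) - Complex.exp (y * Complex.I)‖ = 2 * |sin ((x - y) / 2)| := by
  have hfactor : Complex.exp (x * Complex.I) - Complex.exp (y * Complex.I) =
      Complex.exp (y * Complex.I) * (Complex.exp (Complex.I * ↑(x - y)) - 1) := by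
    rw [mul_sub, ← Complex.exp_add]
    push_cast
    ring_nf
  rw [hfactor, norm_mul, Complex.norm_exp_ofReal_mul_I, one_mul,
    Complex.norm_exp_I_mul_ofReal_sub_one, norm_eq_abs, abs_mul, abs_two]

lemma norm_exp_ofReal_mul_I_sub_le (x y : ℝ) :
    ‖Complex.exp (x * Complex.I) - Complex.exp (y * Complex.I)‖ ≤ |x - y| := by
  have hsin : |sin ((x - y) / 2)| ≤ |x - y| / 2 := by
    simpa [abs_div] using abs_sin_le_abs (x := (x - y) / 2)
  rw [norm_exp_ofReal_mul_I_sub]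
  linarith

lemma integrable_exp_ofReal_mul_I {X : Type*} [MeasurableSpace X] {μ : Measure X}
    [IsFiniteMeasure μ] {f : X → ℝ} (hf : AEMeasurable f μ) :
    Integrable (fun x => Complex.exp (f x * Complex.I)) μ := by
  refine Integrable.of_bound (C := 1) ?_ (ae_of_all _ fun x => (Complex.norm_exp_ofReal_mul_I _).le)
  exact (Complex.measurable_exp.comp_aemeasurable
    ((Complex.measurable_ofReal.comp_aemeasurable hf).mul_const _)).aestronglyMeasurable

lemma exists_closedBall_of_abs_sin_lt {d r ε : ℝ} (hd : d ≠ 0) (hr : |d| * (2 * r) ≤ π / 2)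
    (x : ℝ) : ∃ z, ∀ y ∈ closedBall x r, |sin (d * y)| < ε → y ∈ closedBall z (π * ε / |d|) := by
  by_cases h : ∃ z ∈ closedBall x r, |sin (d * z)| < ε
  · obtain ⟨z, hz, hzε⟩ := h
    refine ⟨z, fun y hy hyε => ?_⟩
    have hdist : |y - z| ≤ 2 * r := by
      have := dist_triangle_right y z x
      rw [mem_closedBall] at hy hz
      rw [← Real.dist_eq]
      linarith
    have hsmall : |d * (y - z)| ≤ π / 2 := by
      rw [abs_mul]
      exact (mul_le_mul_of_nonneg_left hdist (abs_nonneg d)).trans hr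
    have hsin : |sin (d * (y - z))| ≤ 2 * ε :=
      calc |sin (d * (y - z))|
          = |sin (d * y) * cos (d * z) - cos (d * y) * sin (d * z)| := by rw [mul_sub, sin_sub]
        _ ≤ |sin (d * y)| * |cos (d * z)| + |cos (d * y)| * |sin (d * z)| := by
            rw [← abs_mul, ← abs_mul]
            exact abs_sub _ _
        _ ≤ |sin (d * y)| * 1 + 1 * |sin (d * z)| := by gcongr <;> exact abs_cos_le_one _
        _ ≤ 2 * ε := by linarith
    have hjordan := (mul_abs_le_abs_sin hsmall).trans hsin
    rw [abs_mul] at hjordan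
    rw [mem_closedBall, Real.dist_eq, le_div_iff₀ (abs_pos.2 hd)]
    have hπ := pi_pos
    field_simp at hjordan
    linarith
  · push Not at h
    exact ⟨0, fun y hy hyε => absurd hyε (h y hy).not_gt⟩

lemma norm_sum_smul_sq_le {ι E : Type*} [Fintype ι] [NormedAddCommGroup E]
    [InnerProductSpace ℝ E] {p : ι → ℝ} (hp : ∀ k, 0 ≤ p k) (hsum : ∑ k, p k = 1) {z : ι → E}
    (hz : ∀ k, ‖z k‖ = 1) (i j : ι) :
    ‖∑ k, p k • z k‖ ^ 2 ≤ 1 - p i * p j * ‖z i - z j‖ ^ 2 / 2 := by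
  have hvar : ∑ k, ∑ l, p k * p l * ‖z k - z l‖ ^ 2 = 2 - 2 * ‖∑ k, p k • z k‖ ^ 2 :=
    calc ∑ k, ∑ l, p k * p l * ‖z k - z l‖ ^ 2
        = ∑ k, ∑ l, (2 * (p k * p l) - 2 * inner ℝ (p k • z k) (p l • z l)) := by
          refine Finset.sum_congr rfl fun k _ => Finset.sum_congr rfl fun l _ => ?_
          rw [norm_sub_sq_real, hz, hz, real_inner_smul_left, real_inner_smul_right]
          ring
      _ = 2 - 2 * ‖∑ k, p k • z k‖ ^ 2 := by
          simp only [Finset.sum_sub_distrib, ← Finset.mul_sum, ← inner_sum, ← sum_inner,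
            hsum, real_inner_self_eq_norm_sq, mul_one]
  have hterm : p i * p j * ‖z i - z j‖ ^ 2 ≤ ∑ k, ∑ l, p k * p l * ‖z k - z l‖ ^ 2 := by
    have hnonneg : ∀ k l, 0 ≤ p k * p l * ‖z k - z l‖ ^ 2 := fun k l =>
      mul_nonneg (mul_nonneg (hp k) (hp l)) (sq_nonneg _)
    exact (Finset.single_le_sum (fun l _ => hnonneg i l) (Finset.mem_univ j)).trans
      (Finset.single_le_sum (f := fun k => ∑ l, p k * p l * ‖z k - z l‖ ^ 2)
        (fun k _ => Finset.sum_nonneg fun l _ => hnonneg k l) (Finset.mem_univ i))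
  linarith

lemma exists_lt_one_le_pow {b c : ℝ} (hb : b < 1) (hc : c < 1) (n : ℕ) :
    ∃ s, b < s ∧ s < 1 ∧ c ≤ s ^ n := by
  have hlim : Tendsto (fun s : ℝ => s ^ n) (𝓝[<] 1) (𝓝 1) :=
    ((continuous_pow n).tendsto' 1 1 (one_pow n)).mono_left nhdsWithin_le_nhds
  obtain ⟨s, hcs, hbs, hs⟩ := ((hlim.eventually_const_le hc).and (Ioo_mem_nhdsLT hb)).exists
  exact ⟨s, hbs, hs, hcs⟩

lemma exists_rpow_decay_of_geometric_decay {ψ : ℝ → ℝ} {L s C : ℝ} (hL : 1 < L) (hs0 : 0 < s)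
    (hs1 : s < 1) (hC : 0 < C)
    (hψ : ∀ (k : ℕ) (t : ℝ), L ^ k ≤ |t| → |t| ≤ L ^ (k + 1) → ψ t ≤ C * s ^ k) :
    ∃ γ > (0 : ℝ), ∃ C' > (0 : ℝ), ∀ t, 1 ≤ |t| → ψ t ≤ C' * |t| ^ (-γ) := by
  have hL0 : 0 < L := by linarith
  refine ⟨-logb L s, neg_pos.2 (logb_neg hL hs0 hs1), C / s, div_pos hC hs0, fun t ht => ?_⟩
  obtain ⟨k, hk, hk'⟩ := exists_nat_pow_near ht hL
  have hpow : s ^ (k + 1) ≤ |t| ^ logb L s :=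
    calc s ^ (k + 1) = (L ^ logb L s) ^ (k + 1) := by rw [rpow_logb hL0 hL.ne' hs0]
      _ = (L ^ (k + 1)) ^ logb L s := by
          rw [← rpow_natCast, ← rpow_natCast, ← rpow_mul hL0.le, ← rpow_mul hL0.le, mul_comm]
      _ ≤ |t| ^ logb L s :=
          rpow_le_rpow_of_nonpos (by linarith) hk'.le (logb_neg hL hs0 hs1).le
  calc ψ t ≤ C * s ^ k := hψ k t hk hk'.le
    _ = C / s * s ^ (k + 1) := by field_simp; ring
    _ ≤ C / s * |t| ^ (-(-logb L s)) := by rw [neg_neg]; gcongr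

lemma norm_sub_sub_smul_deriv_le_of_lipschitzOnWith {E : Type*} [NormedAddCommGroup E]
    [NormedSpace ℝ E] {f : ℝ → E} (hf : Differentiable ℝ f) {S : Set ℝ} (hS : Convex ℝ S)
    {K : ℝ≥0} (hK : LipschitzOnWith K (deriv f) S) {x t : ℝ} (hx : x ∈ S) (ht : t ∈ S) :
    ‖f t - f x - (t - x) • deriv f x‖ ≤ K * (t - x) ^ 2 := by
  have hsub : segment ℝ x t ⊆ S := hS.segment_subset hx ht
  have hder (s : ℝ) : HasDerivAt (fun s => f s - s • deriv f x) (deriv f s - deriv f x) s := by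
    simpa only [one_smul] using
      (hf s).hasDerivAt.fun_sub ((hasDerivAt_id' s).smul_const (deriv f x))
  have hbound : ∀ s ∈ segment ℝ x t, ‖deriv f s - deriv f x‖ ≤ K * |t - x| := fun s hs => by
    refine (hK.norm_sub_le (hsub hs) hx).trans ?_
    rw [segment_eq_uIcc] at hs
    have := abs_sub_left_of_mem_uIcc hs
    rw [norm_eq_abs]
    gcongr
  have hmvt := (convex_segment x t).norm_image_sub_le_of_norm_hasDerivWithin_le
    (fun s _ => (hder s).hasDerivWithinAt) hbound (left_mem_segment ℝ x t) (right_mem_segment ℝ x t)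
  calc ‖f t - f x - (t - x) • deriv f x‖
      = ‖f t - t • deriv f x - (f x - x • deriv f x)‖ := by rw [sub_smul]; congr 1; abel
    _ ≤ K * |t - x| * ‖t - x‖ := hmvt
    _ = K * (t - x) ^ 2 := by rw [norm_eq_abs, mul_assoc, abs_mul_abs_self, sq]

lemma mul_abs_sub_le_abs_sub_of_le_abs_deriv {f : ℝ → ℝ} (hf : Differentiable ℝ f) {S : Set ℝ}
    (hS : Convex ℝ S) {b : ℝ} (hb : ∀ x ∈ S, b ≤ |deriv f x|) {x y : ℝ} (hx : x ∈ S) (hy : y ∈ S) :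
    b * |x - y| ≤ |f x - f y| := by
  wlog hxy : x ≤ y generalizing x y
  · rw [abs_sub_comm x, abs_sub_comm (f x)]
    exact this hy hx (le_of_not_ge hxy)
  rcases hxy.eq_or_lt with rfl | hlt
  · simp
  obtain ⟨c, hc, hslope⟩ :=
    exists_deriv_eq_slope f hlt hf.continuous.continuousOn hf.differentiableOn
  have hcS : c ∈ S := hS.ordConnected.out hx hy (Ioo_subset_Icc_self hc)
  calc b * |x - y| ≤ |deriv f c| * |x - y| := by gcongr; exact hb c hcS
    _ = |f x - f y| := by
        rw [hslope, abs_div, abs_sub_comm (f x), abs_sub_comm x,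
          div_mul_cancel₀ _ (abs_pos.2 (sub_pos.2 hlt).ne').ne']

lemma exists_forall_abs_le_one_sub_abs_mul {ι : Type*} [Finite ι] {ρ : ℝ} (hρ1 : |ρ| < 1)
    (a : ι → ℝ) : ∃ R, ∀ j, |a j| ≤ (1 - |ρ|) * R := by
  obtain ⟨M, hM⟩ := Finite.exists_le fun j => |a j|
  exact ⟨M / (1 - |ρ|), fun j => (hM j).trans_eq (mul_div_cancel₀ _ (by linarith)).symm⟩

lemma iterate_affine_sub_fixedPoint {ρ b c : ℝ} (hc : ρ * c + b = c) (n : ℕ) (y : ℝ) :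
    (fun y => ρ * y + b)^[n] y - c = ρ ^ n * (y - c) := by
  induction n with
  | zero => simp
  | succ n ih =>
    rw [Function.iterate_succ_apply', pow_succ', mul_assoc, ← ih]
    linear_combination hc

lemma exists_le_abs_iterate_affine_sub {ρ b b' : ℝ} (hρ1 : |ρ| < 1) (hb : b ≠ b') (R : ℝ) :
    ∃ n ≠ 0, ∃ δ > 0, ∀ y ∈ closedBall 0 R, ∀ y' ∈ closedBall 0 R,
      δ ≤ |(fun y => ρ * y + b)^[n] y - (fun y => ρ * y + b')^[n] y'| := by
  have hρ : 1 - ρ ≠ 0 := by linarith [le_abs_self ρ]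
  obtain ⟨c, hc⟩ : ∃ c, ρ * c + b = c := ⟨b / (1 - ρ), by field_simp; ring⟩
  obtain ⟨c', hc'⟩ : ∃ c', ρ * c' + b' = c' := ⟨b' / (1 - ρ), by field_simp; ring⟩
  have hcc : 0 < |c - c'| := by
    rw [abs_pos, sub_ne_zero]
    rintro rfl
    exact hb (by linarith)
  have hlim : Tendsto (fun n : ℕ => |ρ| ^ n * (|c - c'| + 2 * R)) atTop (𝓝 0) := by
    simpa using (tendsto_pow_atTop_nhds_zero_of_lt_one (abs_nonneg ρ) hρ1).mul_const _
  obtain ⟨n, hn, hn0⟩ :=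
    ((hlim.eventually_le_const (half_pos hcc)).and (eventually_ne_atTop 0)).exists
  refine ⟨n, hn0, |c - c'| / 2, half_pos hcc, fun y hy y' hy' => ?_⟩
  rw [mem_closedBall_zero_iff, norm_eq_abs] at hy hy'
  set z := (fun y => ρ * y + b)^[n] y
  set z' := (fun y => ρ * y + b')^[n] y'
  have hyy : |y - y'| ≤ 2 * R := (abs_sub y y').trans (by linarith)
  have hdiff : c - c' = z - z' + ρ ^ n * ((c - c') - (y - y')) := by
    linear_combination
      iterate_affine_sub_fixedPoint hc' n y' - iterate_affine_sub_fixedPoint hc n y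
  have hupper : |c - c'| ≤ |z - z'| + |ρ| ^ n * (|c - c'| + 2 * R) :=
    calc |c - c'| ≤ |z - z'| + |ρ ^ n * ((c - c') - (y - y'))| := by
          conv_lhs => rw [hdiff]
          exact abs_add_le _ _
      _ ≤ |z - z'| + |ρ| ^ n * (|c - c'| + 2 * R) := by
          rw [abs_mul, abs_pow]
          gcongr
          exact (abs_sub _ _).trans (by linarith)
  linarith

lemma integral_norm_comp_pow_le {X Y E : Type*} [MeasurableSpace X] [MeasurableSpace Y]
    [NormedAddCommGroup E] [MeasurableSpace E] [OpensMeasurableSpace E]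
    {μ : Measure X} {f : X → Y} {F : Y → E} {B : Set Y} {q : ℕ} {c : ℝ} (hf : Measurable f)
    (hF : Measurable F) (hB : MeasurableSet B) (hfB : ∀ᵐ x ∂μ, f x ∈ B) (hc : 0 ≤ c)
    (hFc : ∫⁻ y in B, ‖F y‖ₑ ^ q ∂μ.map f ≤ ENNReal.ofReal c) :
    ∫ x, ‖F (f x)‖ ^ q ∂μ ≤ c := by
  rw [Measure.restrict_eq_self_of_ae_mem ((ae_map_iff hf.aemeasurable hB).2 hfB),
    lintegral_map (hF.enorm.pow_const q) hf] at hFc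
  rw [integral_eq_lintegral_of_nonneg_ae (f := fun x => ‖F (f x)‖ ^ q)
    (ae_of_all _ fun x => by positivity) ((hF.comp hf).norm.pow_const q).aestronglyMeasurable]
  simp only [ENNReal.ofReal_pow (norm_nonneg _), ofReal_norm]
  exact ENNReal.toReal_le_of_le_ofReal hc hFc

/-- Replace `f` by its linearisation at each `x` in `S` and average the bounds over `x`. -/
lemma norm_integral_exp_le_integral_norm_charFun {μ : Measure ℝ} [IsProbabilityMeasure μ]
    {S : Set ℝ} (hS : ∀ᵐ x ∂μ, x ∈ S) {D : ℝ} (hD : ∀ x ∈ S, ∀ y ∈ S, |x - y| ≤ D)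
    {f g : ℝ → ℝ} (hf : Measurable f) (hg : Measurable g) {B : ℝ} (hB : 0 ≤ B)
    (hfg : ∀ x ∈ S, ∀ t ∈ S, |f t - f x - g x * (t - x)| ≤ B * (t - x) ^ 2) :
    ‖∫ t, Complex.exp (f t * Complex.I) ∂μ‖ ≤ ∫ x, ‖charFun μ (g x)‖ ∂μ + B * D ^ 2 := by
  have hpoint : ∀ x ∈ S,
      ‖∫ t, Complex.exp (f t * Complex.I) ∂μ‖ - B * D ^ 2 ≤ ‖charFun μ (g x)‖ := fun x hx => by
    have htangent : ∫ t, Complex.exp ((f x + g x * (t - x) : ℝ) * Complex.I) ∂μ =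
        Complex.exp ((f x - g x * x : ℝ) * Complex.I) * charFun μ (g x) := by
      rw [charFun_apply_real, ← integral_const_mul]
      congr 1 with t
      rw [← Complex.exp_add]
      congr 1
      push_cast
      ring
    have herror : ‖∫ t, Complex.exp (f t * Complex.I) ∂μ -
        ∫ t, Complex.exp ((f x + g x * (t - x) : ℝ) * Complex.I) ∂μ‖ ≤ B * D ^ 2 := by
      rw [← integral_sub (integrable_exp_ofReal_mul_I hf.aemeasurable)
        (integrable_exp_ofReal_mul_I (by fun_prop))]
      refine (norm_integral_le_of_norm_le_const (C := B * D ^ 2) ?_).trans_eq (by simp)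
      filter_upwards [hS] with t ht
      calc _ ≤ |f t - (f x + g x * (t - x))| := norm_exp_ofReal_mul_I_sub_le _ _
        _ ≤ B * (t - x) ^ 2 := by
            rw [← sub_sub]
            exact hfg x hx t ht
        _ ≤ B * D ^ 2 := by
            rw [← sq_abs]
            gcongr
            exact hD t ht x hx
    have hnorm := (norm_sub_norm_le _ _).trans herror
    rw [htangent, norm_mul, Complex.norm_exp_ofReal_mul_I, one_mul] at hnorm
    linarith
  have hint : Integrable (fun x => ‖charFun μ (g x)‖) μ :=
    Integrable.of_bound (C := 1) (measurable_charFun.comp hg).norm.aestronglyMeasurable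
      (ae_of_all _ fun x => by rw [norm_norm]; exact norm_charFun_le_one _)
  have hmono := integral_mono_ae (integrable_const _) hint (hS.mono hpoint)
  rw [integral_const, probReal_univ, one_smul] at hmono
  linarith

lemma preimage_affine_closedBall {ρ : ℝ} (hρ : ρ ≠ 0) (a x r : ℝ) :
    (fun y => ρ * y + a) ⁻¹' closedBall x r = closedBall ((x - a) / ρ) (r / |ρ|) := by
  ext y
  have hscale : |y - (x - a) / ρ| * |ρ| = |ρ * y + a - x| := by
    rw [← abs_mul]
    congr 1
    field_simp
    ring
  rw [mem_preimage, mem_closedBall, mem_closedBall, Real.dist_eq, Real.dist_eq,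
    le_div_iff₀ (abs_pos.2 hρ), hscale]

lemma measure_closedBall_nat_mul_le {ν : Measure ℝ} {r : ℝ} {κ : ℝ≥0∞}
    (hν : ∀ x, ν (closedBall x r) ≤ κ) {n : ℕ} (hn : 1 ≤ n) :
    ∀ x, ν (closedBall x (n * r)) ≤ n * κ := by
  induction n, hn using Nat.le_induction with
  | base => simpa using hν
  | succ n _ ih =>
    intro x
    have hcover : closedBall x ((n + 1 : ℕ) * r) ⊆
        closedBall (x - r) (n * r) ∪ closedBall (x + n * r) r := by
      intro y hy
      simp only [Real.closedBall_eq_Icc, mem_union, mem_Icc, Nat.cast_add, Nat.cast_one] at hy ⊢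
      rcases le_total y (x + (n - 1) * r) with h | h
      · left
        constructor <;> linarith [hy.1]
      · right
        constructor <;> linarith [hy.2]
    calc ν (closedBall x ((n + 1 : ℕ) * r))
        ≤ ν (closedBall (x - r) (n * r)) + ν (closedBall (x + n * r) r) :=
          (measure_mono hcover).trans (measure_union_le _ _)
      _ ≤ n * κ + κ := add_le_add (ih _) (hν _)
      _ = (n + 1 : ℕ) * κ := by push_cast; ring

lemma measure_map_closedBall_le_of_expanding {μ : Measure ℝ} {S : Set ℝ}
    (hS : ∀ᵐ x ∂μ, x ∈ S) {Y : ℝ → ℝ} (hY : Measurable Y) {c r : ℝ} (hc : 0 < c)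
    (hexp : ∀ x ∈ S, ∀ y ∈ S, c * |x - y| ≤ |Y x - Y y|) {κ : ℝ≥0∞}
    (hμ : ∀ x, μ (closedBall x (2 * r / c)) ≤ κ) (z : ℝ) : μ.map Y (closedBall z r) ≤ κ := by
  rw [Measure.map_apply hY measurableSet_closedBall]
  by_cases hex : ∃ x₀ ∈ S, Y x₀ ∈ closedBall z r
  · obtain ⟨x₀, hx₀, hYx₀⟩ := hex
    refine (measure_mono_ae ?_).trans (hμ x₀)
    filter_upwards [hS] with x hx hYx
    have hdist : |Y x - Y x₀| ≤ 2 * r := by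
      have htri := dist_triangle_right (Y x) (Y x₀) z
      have hYx' : dist (Y x) z ≤ r := hYx
      rw [mem_closedBall] at hYx₀
      rw [← Real.dist_eq]
      linarith
    change x ∈ closedBall x₀ (2 * r / c)
    rw [mem_closedBall, Real.dist_eq, le_div_iff₀' hc]
    exact (hexp x hx x₀ hx₀).trans hdist
  · push Not at hex
    refine (measure_mono_null (fun x hYx hx => hex x hx hYx) hS).le.trans zero_le

/-! ### Moments along a multiplicative recursion -/

lemma map_withDensity_closedBall_le {ν : Measure ℝ} {H : ℝ → ℝ≥0∞} {ρ r : ℝ} {η κ : ℝ≥0∞}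
    (hρ : ρ ≠ 0) (hr : 0 ≤ r) (hH : ∀ y, H y ≤ 1)
    (hsparse : ∀ x, ∃ z, ∀ y ∈ closedBall x (r / |ρ|), y ∉ closedBall z r → H y ≤ η)
    {n : ℕ} (hn : 1 ≤ n * |ρ|) (hν : ∀ x, ν (closedBall x r) ≤ κ) (x : ℝ) :
    (ν.withDensity H).map (fun y => ρ * y) (closedBall x r) ≤ (1 + n * η) * κ := by
  have hρ0 : 0 < |ρ| := abs_pos.2 hρ
  have hn1 : 1 ≤ n := Nat.one_le_iff_ne_zero.2 fun h => by simp [h] at hn; linarith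
  have hpre : (fun y => ρ * y) ⁻¹' closedBall x r = closedBall (x / ρ) (r / |ρ|) := by
    simpa using preimage_affine_closedBall hρ 0 x r
  have hball : closedBall (x / ρ) (r / |ρ|) ⊆ closedBall (x / ρ) (n * r) := by
    refine closedBall_subset_closedBall ((div_le_iff₀ hρ0).2 ?_)
    nlinarith
  obtain ⟨z, hz⟩ := hsparse (x / ρ)
  set J := closedBall (x / ρ) (r / |ρ|)
  set I := closedBall z r
  rw [Measure.map_apply (by fun_prop) measurableSet_closedBall, hpre,
    withDensity_apply _ measurableSet_closedBall]
  calc ∫⁻ y in J, H y ∂ν ≤ ∫⁻ y in J, (I.indicator 1 y + η) ∂ν := by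
        refine setLIntegral_mono' measurableSet_closedBall fun y hy => ?_
        by_cases hyI : y ∈ I
        · rw [indicator_of_mem hyI]
          exact (hH y).trans le_self_add
        · exact (hz y hy hyI).trans le_add_self
    _ = ∫⁻ y in J, I.indicator 1 y ∂ν + η * ν J := by
        rw [lintegral_add_right _ measurable_const, setLIntegral_const]
    _ ≤ ν I + η * ν J := by
        gcongr
        refine (setLIntegral_le_lintegral _ _).trans ?_
        rw [lintegral_indicator_one measurableSet_closedBall]
    _ ≤ κ + η * (n * κ) := by
        gcongr
        · exact hν z
        · exact (measure_mono hball).trans (measure_closedBall_nat_mul_le hν hn1 _)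
    _ = (1 + n * η) * κ := by ring

/-- One step of the recursion replaces `ν` by the image of `H ν` under `y ↦ ρ * y`, whose largest
mass on a ball of radius `r` is at most `1 + n * η` times that of `ν`. -/
lemma setLIntegral_closedBall_le_of_recursion {G H : ℝ → ℝ≥0∞} {ρ r : ℝ} {η : ℝ≥0∞}
    (hρ : ρ ≠ 0) (hr : 0 ≤ r) (hGm : Measurable G) (hHm : Measurable H) (hG : ∀ y, G y ≤ 1)
    (hH : ∀ y, H y ≤ 1) (hrec : ∀ y, G y ≤ H y * G (ρ * y))
    (hsparse : ∀ x, ∃ z, ∀ y ∈ closedBall x (r / |ρ|), y ∉ closedBall z r → H y ≤ η)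
    {n n₀ : ℕ} (hn : 1 ≤ n * |ρ|) (hn₀ : 1 ≤ n₀ * r) (N : ℕ) :
    ∀ (ν : Measure ℝ) (κ : ℝ≥0∞), (∀ x, ν (closedBall x r) ≤ κ) →
      ∫⁻ y in closedBall 0 (|ρ|⁻¹ ^ N), G y ∂ν ≤ n₀ * (1 + n * η) ^ N * κ := by
  induction N with
  | zero =>
    intro ν κ hν
    have hn₀1 : 1 ≤ n₀ := Nat.one_le_iff_ne_zero.2 fun h => by simp [h] at hn₀; linarith
    calc ∫⁻ y in closedBall 0 (|ρ|⁻¹ ^ 0), G y ∂ν ≤ ∫⁻ _ in closedBall 0 (|ρ|⁻¹ ^ 0), 1 ∂ν :=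
          lintegral_mono hG
      _ = ν (closedBall 0 1) := by rw [setLIntegral_one, pow_zero]
      _ ≤ ν (closedBall 0 (n₀ * r)) := measure_mono (closedBall_subset_closedBall hn₀)
      _ ≤ n₀ * (1 + n * η) ^ 0 * κ := by
          simpa using measure_closedBall_nat_mul_le hν hn₀1 0
  | succ N ih =>
    intro ν κ hν
    have hmul : Measurable (fun y : ℝ => ρ * y) := by fun_prop
    have hpre : (fun y => ρ * y) ⁻¹' closedBall 0 (|ρ|⁻¹ ^ N) = closedBall 0 (|ρ|⁻¹ ^ (N + 1)) := by
      simpa [pow_succ, div_eq_mul_inv] using preimage_affine_closedBall hρ 0 0 (|ρ|⁻¹ ^ N)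
    calc ∫⁻ y in closedBall 0 (|ρ|⁻¹ ^ (N + 1)), G y ∂ν
        ≤ ∫⁻ y in closedBall 0 (|ρ|⁻¹ ^ (N + 1)), H y * G (ρ * y) ∂ν := lintegral_mono hrec
      _ = ∫⁻ y in closedBall 0 (|ρ|⁻¹ ^ N), G y ∂(ν.withDensity H).map (fun y => ρ * y) := by
          rw [setLIntegral_map measurableSet_closedBall hGm hmul, hpre,
            setLIntegral_withDensity_eq_setLIntegral_mul (g := fun y => G (ρ * y)) ν hHm
              (hGm.comp hmul) measurableSet_closedBall]
          rfl
      _ ≤ n₀ * (1 + n * η) ^ N * ((1 + n * η) * κ) :=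
          ih _ _ (map_withDensity_closedBall_le hρ hr hH hsparse hn hν)
      _ = n₀ * (1 + n * η) ^ (N + 1) * κ := by ring

/-! ### Self-similar measures -/

section SelfSimilar

variable {ι : Type*} [Fintype ι] {ρ : ℝ} {a p : ι → ℝ} {μ : Measure ℝ}

/-- `μ` is a self-similar measure for the maps `x ↦ ρ * x + a j` with weights `p j`. The images of
the maps may overlap and the weights may vanish. -/
structure IsSelfSimilarMeasure (ρ : ℝ) (a p : ι → ℝ) (μ : Measure ℝ) : Prop where
  weight_nonneg : ∀ j, 0 ≤ p j
  eq_sum_map : μ = ∑ j, ENNReal.ofReal (p j) • μ.map (fun x => ρ * x + a j)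

/-- The characteristic function of the discrete measure `∑ j, p j • dirac (a j)`. It is the factor
relating `charFun μ t` to `charFun μ (ρ * t)` for a self-similar measure `μ`. -/
noncomputable def maskSymbol (a p : ι → ℝ) (t : ℝ) : ℂ :=
  ∑ j, p j • Complex.exp ((t * a j : ℝ) * Complex.I)

lemma continuous_maskSymbol (a p : ι → ℝ) : Continuous (maskSymbol a p) := by
  unfold maskSymbol
  fun_prop

lemma norm_maskSymbol_sq_le (hp : ∀ k, 0 ≤ p k) (hsum : ∑ k, p k = 1) (i j : ι) (t : ℝ) :
    ‖maskSymbol a p t‖ ^ 2 ≤ 1 - 2 * (p i * p j) * sin ((a i - a j) / 2 * t) ^ 2 := by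
  have hbound := norm_sum_smul_sq_le hp hsum
    (fun k => Complex.norm_exp_ofReal_mul_I (t * a k)) i j
  rw [norm_exp_ofReal_mul_I_sub, mul_pow, sq_abs,
    show (t * a i - t * a j) / 2 = (a i - a j) / 2 * t by ring] at hbound
  unfold maskSymbol
  linarith

lemma norm_maskSymbol_le_one (hp : ∀ k, 0 ≤ p k) (hsum : ∑ k, p k = 1) (t : ℝ) :
    ‖maskSymbol a p t‖ ≤ 1 :=
  calc ‖maskSymbol a p t‖ ≤ ∑ j, ‖p j • Complex.exp ((t * a j : ℝ) * Complex.I)‖ :=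
        norm_sum_le _ _
    _ = 1 := by
        simp only [norm_smul, Complex.norm_exp_ofReal_mul_I, mul_one, norm_of_nonneg (hp _), hsum]

lemma exists_enorm_maskSymbol_pow_le_off_closedBall (hp : ∀ k, 0 ≤ p k) (hsum : ∑ k, p k = 1)
    {i j : ι} (hi : 0 < p i) (hj : 0 < p j) (hij : a i ≠ a j) {L : ℝ} (hL : 0 < L) {η : ℝ≥0∞}
    (hη : 0 < η) :
    ∃ q ≠ 0, ∃ r > 0, ∀ x, ∃ z, ∀ y ∈ closedBall x (r / L), y ∉ closedBall z r →
      ‖maskSymbol a p y‖ₑ ^ q ≤ η := by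
  obtain ⟨d, hd⟩ : ∃ d, d = (a i - a j) / 2 := ⟨_, rfl⟩
  have hd0 : d ≠ 0 := hd ▸ div_ne_zero (sub_ne_zero.2 hij) two_ne_zero
  obtain ⟨r, hr⟩ : ∃ r, r = π * (L / 4) / |d| := ⟨_, rfl⟩
  have hperiod : |d| * (2 * (r / L)) ≤ π / 2 := by
    rw [hr]
    field_simp
    norm_num
  obtain ⟨c, hc⟩ : ∃ c, c = 1 - 2 * (p i * p j) * (L / 4) ^ 2 := ⟨_, rfl⟩
  have hc1 : ENNReal.ofReal c < 1 := by
    rw [← ENNReal.ofReal_one, ENNReal.ofReal_lt_ofReal_iff one_pos, hc]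
    exact sub_lt_self 1 (by positivity)
  obtain ⟨Q, hQ, hQ0⟩ := (((ENNReal.tendsto_pow_atTop_nhds_zero_of_lt_one hc1).eventually_le_const
    hη).and (eventually_ne_atTop 0)).exists
  refine ⟨2 * Q, mul_ne_zero two_ne_zero hQ0, r, by rw [hr]; positivity, fun x => ?_⟩
  obtain ⟨z, hz⟩ := exists_closedBall_of_abs_sin_lt (ε := L / 4) hd0 hperiod x
  refine ⟨z, fun y hy hyz => ?_⟩
  have hsin : L / 4 ≤ |sin (d * y)| := not_lt.1 fun hlt => hyz (hr ▸ hz y hy hlt)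
  have hsq : ‖maskSymbol a p y‖ ^ 2 ≤ c :=
    calc ‖maskSymbol a p y‖ ^ 2 ≤ 1 - 2 * (p i * p j) * |sin (d * y)| ^ 2 := by
          rw [sq_abs, hd]
          exact norm_maskSymbol_sq_le hp hsum i j y
      _ ≤ c := by
          rw [hc]
          gcongr
  calc ‖maskSymbol a p y‖ₑ ^ (2 * Q) = ENNReal.ofReal (‖maskSymbol a p y‖ ^ 2) ^ Q := by
        rw [pow_mul, ← ofReal_norm, ENNReal.ofReal_pow (norm_nonneg _)]
    _ ≤ ENNReal.ofReal c ^ Q := by gcongr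
    _ ≤ η := hQ

namespace IsSelfSimilarMeasure

lemma integral_eq_sum {E : Type*} [NormedAddCommGroup E] [NormedSpace ℝ E]
    (h : IsSelfSimilarMeasure ρ a p μ) {g : ℝ → E} (hg : StronglyMeasurable g)
    (hgi : Integrable g μ) : ∫ x, g x ∂μ = ∑ j, p j • ∫ x, g (ρ * x + a j) ∂μ := by
  have hint : ∀ j ∈ Finset.univ,
      Integrable g (ENNReal.ofReal (p j) • μ.map fun x => ρ * x + a j) := by
    rw [h.eq_sum_map] at hgi
    exact integrable_finsetSum_measure.1 hgi
  conv_lhs => rw [h.eq_sum_map]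
  rw [integral_finsetSum_measure hint]
  refine Finset.sum_congr rfl fun j _ => ?_
  rw [integral_smul_measure, ENNReal.toReal_ofReal (h.weight_nonneg j),
    integral_map_of_stronglyMeasurable (by fun_prop) hg]

lemma measureReal_eq_sum [IsFiniteMeasure μ] (h : IsSelfSimilarMeasure ρ a p μ) {A : Set ℝ}
    (hA : MeasurableSet A) : μ.real A = ∑ j, p j * μ.real ((fun x => ρ * x + a j) ⁻¹' A) := by
  have hpre : ∀ j, ∫ x, A.indicator (1 : ℝ → ℝ) (ρ * x + a j) ∂μ =
      μ.real ((fun x => ρ * x + a j) ⁻¹' A) := fun j =>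
    integral_indicator_one (hA.preimage (by fun_prop))
  rw [← integral_indicator_one hA, h.integral_eq_sum (stronglyMeasurable_one.indicator hA)
    ((integrable_const (1 : ℝ)).indicator hA)]
  simp only [hpre, smul_eq_mul]

lemma sum_weight [IsProbabilityMeasure μ] (h : IsSelfSimilarMeasure ρ a p μ) : ∑ j, p j = 1 := by
  simpa using (h.measureReal_eq_sum MeasurableSet.univ).symm

lemma charFun_eq_maskSymbol_mul [IsFiniteMeasure μ] (h : IsSelfSimilarMeasure ρ a p μ) (t : ℝ) :
    charFun μ t = maskSymbol a p t * charFun μ (ρ * t) := by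
  have hmeas : Measurable fun x : ℝ => t * x := by fun_prop
  have hsum := h.integral_eq_sum (g := fun x => Complex.exp ((t * x : ℝ) * Complex.I))
    (by fun_prop) (integrable_exp_ofReal_mul_I hmeas.aemeasurable)
  simp only [charFun_apply_real, ← Complex.ofReal_mul]
  rw [hsum, maskSymbol, Finset.sum_mul]
  refine Finset.sum_congr rfl fun j _ => ?_
  rw [smul_mul_assoc, ← integral_const_mul]
  congr 2 with x
  rw [← Complex.exp_add]
  congr 1
  push_cast
  ring

/-- `u` need not be integrable, so invariance of `μ` is applied to the bounded function
`arctan ∘ u`. -/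
lemma ae_eq_zero_of_le_mul [IsProbabilityMeasure μ] (h : IsSelfSimilarMeasure ρ a p μ)
    {u : ℝ → ℝ} (hu : Continuous u) (hu0 : ∀ x, 0 ≤ u x) {c : ℝ} (hc : c < 1)
    (hcontr : ∀ j x, u (ρ * x + a j) ≤ c * u x) : ∀ᵐ x ∂μ, u x = 0 := by
  have hint : ∀ {v : ℝ → ℝ}, Continuous v → Integrable (fun x => arctan (v x)) μ := fun hv =>
    Integrable.of_bound (C := π / 2) (by fun_prop)
      (ae_of_all _ fun x => abs_le.2 ⟨(neg_pi_div_two_lt_arctan _).le, (arctan_lt_pi_div_two _).le⟩)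
  have hle : ∀ x, arctan (c * u x) ≤ arctan (u x) := fun x =>
    arctan_mono (mul_le_of_le_one_left (hu0 x) hc.le)
  have hge : ∫ x, arctan (u x) ∂μ ≤ ∫ x, arctan (c * u x) ∂μ :=
    calc ∫ x, arctan (u x) ∂μ = ∑ j, p j * ∫ x, arctan (u (ρ * x + a j)) ∂μ :=
          h.integral_eq_sum (by fun_prop) (hint hu)
      _ ≤ ∑ j, p j * ∫ x, arctan (c * u x) ∂μ := by
          refine Finset.sum_le_sum fun j _ => mul_le_mul_of_nonneg_left ?_ (h.weight_nonneg j)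
          exact integral_mono (hint (by fun_prop)) (hint (by fun_prop)) fun x =>
            arctan_mono (hcontr j x)
      _ = ∫ x, arctan (c * u x) ∂μ := by rw [← Finset.sum_mul, h.sum_weight, one_mul]
  have heq := (integral_eq_iff_of_ae_le (hint (by fun_prop)) (hint hu) (ae_of_all _ hle)).1
    (le_antisymm (integral_mono (hint (by fun_prop)) (hint hu) hle) hge)
  filter_upwards [heq] with x hx
  have hfix : c * u x = u x := arctan_injective hx
  exact (mul_eq_zero.1 (show (1 - c) * u x = 0 by linarith)).resolve_left (by linarith)

lemma ae_mem_closedBall [IsProbabilityMeasure μ] (h : IsSelfSimilarMeasure ρ a p μ)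
    (hρ1 : |ρ| < 1) {R : ℝ} (hR : ∀ j, |a j| ≤ (1 - |ρ|) * R) : ∀ᵐ x ∂μ, x ∈ closedBall 0 R := by
  have hzero := h.ae_eq_zero_of_le_mul (u := fun x => max (|x| - R) 0) (by fun_prop)
    (fun x => le_max_right _ _) hρ1 fun j x => by
      have hexcess : |ρ * x + a j| - R ≤ |ρ| * (|x| - R) := by
        have := abs_add_le (ρ * x) (a j)
        rw [abs_mul] at this
        linarith [hR j]
      rw [mul_max_of_nonneg _ _ (abs_nonneg ρ), mul_zero]
      exact max_le_max_right 0 hexcess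
  filter_upwards [hzero] with x hx
  rw [mem_closedBall_zero_iff, norm_eq_abs]
  exact sub_nonpos.1 (max_eq_right_iff.1 hx)

lemma measureReal_closedBall_le_iterate [IsProbabilityMeasure μ]
    (h : IsSelfSimilarMeasure ρ a p μ) (hρ0 : ρ ≠ 0) (hρ1 : |ρ| < 1) {r κ : ℝ} (hr : 0 ≤ r)
    (hκ : ∀ x, μ.real (closedBall x r) ≤ κ) (i : ι) (n : ℕ) (x : ℝ) :
    μ.real (closedBall x (|ρ| ^ n * r)) ≤
      p i ^ n * μ.real ((fun y => ρ * y + a i)^[n] ⁻¹' closedBall x (|ρ| ^ n * r)) +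
        (1 - p i ^ n) * κ := by
  classical
  induction n generalizing x with
  | zero => simp
  | succ n ih =>
    have hpre : ∀ j, (fun y => ρ * y + a j) ⁻¹' closedBall x (|ρ| ^ (n + 1) * r) =
        closedBall ((x - a j) / ρ) (|ρ| ^ n * r) := fun j => by
      rw [preimage_affine_closedBall hρ0]
      congr 1
      rw [pow_succ, mul_right_comm, mul_div_cancel_right₀ _ (abs_pos.2 hρ0).ne']
    have hshrink : |ρ| ^ n * r ≤ r :=
      mul_le_of_le_one_left hr (pow_le_one₀ (abs_nonneg ρ) hρ1.le)
    have hother : ∑ j ∈ Finset.univ.erase i,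
        p j * μ.real (closedBall ((x - a j) / ρ) (|ρ| ^ n * r)) ≤ (1 - p i) * κ := by
      rw [← h.sum_weight, ← Finset.sum_erase_eq_sub (Finset.mem_univ i), Finset.sum_mul]
      exact Finset.sum_le_sum fun j _ => mul_le_mul_of_nonneg_left
        ((measureReal_mono (closedBall_subset_closedBall hshrink)).trans (hκ _))
        (h.weight_nonneg j)
    have hself := mul_le_mul_of_nonneg_left (ih ((x - a i) / ρ)) (h.weight_nonneg i)
    rw [h.measureReal_eq_sum measurableSet_closedBall, Function.iterate_succ', preimage_comp]
    simp only [hpre]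
    rw [← Finset.add_sum_erase _ _ (Finset.mem_univ i)]
    calc _ ≤ _ := add_le_add hself hother
      _ = _ := by ring

/-- Iterates of two of the maps move the support close to two distinct fixed points, so a short
ball misses one of the two images. -/
lemma exists_measureReal_closedBall_contraction [IsProbabilityMeasure μ]
    (h : IsSelfSimilarMeasure ρ a p μ) (hρ0 : ρ ≠ 0) (hρ1 : |ρ| < 1) {i j : ι} (hi : 0 < p i)
    (hj : 0 < p j) (hij : a i ≠ a j) :
    ∃ n ≠ 0, ∃ r₀ > 0, ∃ q < 1, ∀ r κ, 0 ≤ r → |ρ| ^ n * r ≤ r₀ →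
      (∀ x, μ.real (closedBall x r) ≤ κ) → ∀ x, μ.real (closedBall x (|ρ| ^ n * r)) ≤ q * κ := by
  obtain ⟨R, hR⟩ := exists_forall_abs_le_one_sub_abs_mul hρ1 a
  obtain ⟨n, hn, δ, hδ, hsep⟩ := exists_le_abs_iterate_affine_sub hρ1 hij R
  refine ⟨n, hn, δ / 3, by positivity, 1 - min (p i ^ n) (p j ^ n),
    sub_lt_self 1 (lt_min (by positivity) (by positivity)), fun r κ hr hrδ hκ x => ?_⟩
  have hκ0 : 0 ≤ κ := measureReal_nonneg.trans (hκ 0)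
  set B := closedBall x (|ρ| ^ n * r)
  have hmiss : ∀ l, min (p i ^ n) (p j ^ n) ≤ p l ^ n →
      Disjoint ((fun y => ρ * y + a l)^[n] ⁻¹' B) (closedBall 0 R) →
      μ.real B ≤ (1 - min (p i ^ n) (p j ^ n)) * κ := fun l hl hdisj => by
    have hnull : μ.real ((fun y => ρ * y + a l)^[n] ⁻¹' B) = 0 := by
      rw [measureReal_eq_zero_iff]
      exact measure_mono_null (fun y hy => disjoint_left.1 hdisj hy) (h.ae_mem_closedBall hρ1 hR)
    have hiter := h.measureReal_closedBall_le_iterate hρ0 hρ1 hr hκ l n x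
    rw [hnull, mul_zero, zero_add] at hiter
    exact hiter.trans (by gcongr)
  by_cases hdisj : Disjoint ((fun y => ρ * y + a i)^[n] ⁻¹' B) (closedBall 0 R)
  · exact hmiss i (min_le_left _ _) hdisj
  · refine hmiss j (min_le_right _ _) (disjoint_left.2 fun y' hy'B hy' => ?_)
    obtain ⟨y, hyB, hy⟩ := not_disjoint_iff.1 hdisj
    have hclose := dist_triangle_right ((fun y => ρ * y + a i)^[n] y)
      ((fun y => ρ * y + a j)^[n] y') x
    have hfar := hsep y hy y' hy'
    rw [← Real.dist_eq] at hfar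
    rw [mem_preimage, mem_closedBall] at hyB hy'B
    linarith

lemma exists_measureReal_closedBall_le [IsProbabilityMeasure μ]
    (h : IsSelfSimilarMeasure ρ a p μ) (hρ0 : ρ ≠ 0) (hρ1 : |ρ| < 1) {i j : ι} (hi : 0 < p i)
    (hj : 0 < p j) (hij : a i ≠ a j) :
    ∃ P > 0, P < 1 ∧ ∀ A, 0 ≤ A →
      ∃ C > 0, ∀ (k : ℕ) (x : ℝ), μ.real (closedBall x (A * |ρ| ^ k)) ≤ C * P ^ k := by
  obtain ⟨n, hn, r₀, hr₀, q, hq, hcontr⟩ :=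
    h.exists_measureReal_closedBall_contraction hρ0 hρ1 hi hj hij
  obtain ⟨P, hP0, hP1, hqP⟩ := exists_lt_one_le_pow zero_lt_one hq n
  refine ⟨P, hP0, hP1, fun A hA => ?_⟩
  have hlim : Tendsto (fun k : ℕ => A * |ρ| ^ k) atTop (𝓝 0) := by
    simpa using (tendsto_pow_atTop_nhds_zero_of_lt_one (abs_nonneg ρ) hρ1).const_mul A
  obtain ⟨k₀, hk₀⟩ := eventually_atTop.1 (hlim.eventually_le_const hr₀)
  refine ⟨(P ^ (k₀ + n))⁻¹, by positivity, fun k => ?_⟩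
  induction k using Nat.strong_induction_on with
  | _ k ih =>
    intro x
    rcases le_or_gt k (k₀ + n) with hk | hk
    · calc μ.real (closedBall x (A * |ρ| ^ k)) ≤ 1 := measureReal_le_one
        _ ≤ (P ^ (k₀ + n))⁻¹ * P ^ k := by
          rw [← div_eq_inv_mul, one_le_div (by positivity)]
          exact pow_le_pow_of_le_one hP0.le hP1.le hk
    · obtain ⟨l, rfl⟩ := Nat.exists_eq_add_of_le' (show n ≤ k by omega)
      have hscale : A * |ρ| ^ (l + n) = |ρ| ^ n * (A * |ρ| ^ l) := by ring
      calc μ.real (closedBall x (A * |ρ| ^ (l + n)))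
          = μ.real (closedBall x (|ρ| ^ n * (A * |ρ| ^ l))) := by rw [hscale]
        _ ≤ q * ((P ^ (k₀ + n))⁻¹ * P ^ l) :=
          hcontr _ _ (by positivity) (hscale ▸ hk₀ (l + n) (by omega)) (ih l (by omega)) x
        _ ≤ P ^ n * ((P ^ (k₀ + n))⁻¹ * P ^ l) := by gcongr
        _ = (P ^ (k₀ + n))⁻¹ * P ^ (l + n) := by ring

lemma exists_setLIntegral_enorm_charFun_pow_le [IsProbabilityMeasure μ]
    (h : IsSelfSimilarMeasure ρ a p μ) (hρ0 : ρ ≠ 0) {i j : ι} (hi : 0 < p i) (hj : 0 < p j)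
    (hij : a i ≠ a j) {β : ℝ} (hβ : 1 < β) :
    ∃ q ≠ 0, ∃ C : ℕ, ∃ r > 0, ∀ (N : ℕ) (ν : Measure ℝ) (κ : ℝ≥0∞),
      (∀ x, ν (closedBall x r) ≤ κ) →
        ∫⁻ y in closedBall 0 (|ρ|⁻¹ ^ N), ‖charFun μ y‖ₑ ^ q ∂ν ≤ C * ENNReal.ofReal β ^ N * κ := by
  have hρ : 0 < |ρ| := abs_pos.2 hρ0
  have hβ0 : 0 < ENNReal.ofReal (β - 1) := ENNReal.ofReal_pos.2 (sub_pos.2 hβ)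
  obtain ⟨n, hn⟩ := exists_nat_ge |ρ|⁻¹
  obtain ⟨q, hq, r, hr, hsparse⟩ := exists_enorm_maskSymbol_pow_le_off_closedBall h.weight_nonneg
    h.sum_weight hi hj hij hρ (ENNReal.div_pos hβ0.ne' (ENNReal.natCast_ne_top n))
  obtain ⟨C, hC⟩ := exists_nat_ge r⁻¹
  have hbase : 1 + n * (ENNReal.ofReal (β - 1) / n) ≤ ENNReal.ofReal β :=
    calc 1 + n * (ENNReal.ofReal (β - 1) / n) ≤ ENNReal.ofReal 1 + ENNReal.ofReal (β - 1) := by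
          rw [ENNReal.ofReal_one]
          gcongr
          exact ENNReal.mul_div_le
      _ = ENNReal.ofReal β := by
          rw [← ENNReal.ofReal_add zero_le_one (sub_nonneg.2 hβ.le), add_sub_cancel]
  have hpow : ∀ z : ℂ, ‖z‖ ≤ 1 → ‖z‖ₑ ^ q ≤ 1 := fun z hz =>
    pow_le_one₀ zero_le (ofReal_norm z ▸ ENNReal.ofReal_le_one.2 hz)
  refine ⟨q, hq, C, r, hr, fun N ν κ hν => ?_⟩
  calc ∫⁻ y in closedBall 0 (|ρ|⁻¹ ^ N), ‖charFun μ y‖ₑ ^ q ∂ν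
      ≤ C * (1 + n * (ENNReal.ofReal (β - 1) / n)) ^ N * κ :=
        setLIntegral_closedBall_le_of_recursion (H := fun y => ‖maskSymbol a p y‖ₑ ^ q) hρ0 hr.le
          (measurable_charFun.enorm.pow_const _)
          ((continuous_maskSymbol a p).measurable.enorm.pow_const _)
          (fun y => hpow _ (norm_charFun_le_one y))
          (fun y => hpow _ (norm_maskSymbol_le_one h.weight_nonneg h.sum_weight y))
          (fun y => by rw [h.charFun_eq_maskSymbol_mul, enorm_mul, mul_pow]) hsparse
          ((inv_le_iff_one_le_mul₀ hρ).1 hn) ((inv_le_iff_one_le_mul₀ hr).1 hC) N ν κ hν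
    _ ≤ C * ENNReal.ofReal β ^ N * κ := by gcongr

lemma exists_integral_norm_charFun_pow_le [IsProbabilityMeasure μ]
    (h : IsSelfSimilarMeasure ρ a p μ) (hρ0 : ρ ≠ 0) (hρ1 : |ρ| < 1) {i j : ι} (hi : 0 < p i)
    (hj : 0 < p j) (hij : a i ≠ a j) {S : Set ℝ} (hS : ∀ᵐ x ∂μ, x ∈ S) {g : ℝ → ℝ}
    (hg : Measurable g) {b D : ℝ} (hb : 0 < b)
    (hexp : ∀ x ∈ S, ∀ y ∈ S, b * |x - y| ≤ |g x - g y|) (hD : ∀ x ∈ S, |g x| ≤ D) (m : ℕ) :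
    ∃ q ≠ 0, ∃ θ > 0, θ < 1 ∧ ∃ C, ∀ (k : ℕ) (T : ℝ), |ρ|⁻¹ ^ k ≤ |T| → |T| ≤ |ρ|⁻¹ ^ (k + m) →
      ∫ x, ‖charFun μ (T * g x)‖ ^ q ∂μ ≤ C * θ ^ k := by
  have hρ : 0 < |ρ| := abs_pos.2 hρ0
  obtain ⟨P, hP0, hP1, hfrostman⟩ := h.exists_measureReal_closedBall_le hρ0 hρ1 hi hj hij
  obtain ⟨β, hβ1, hβ⟩ := exists_between ((one_lt_div hP0).2 hP1)
  have hβ0 : 0 < β := by linarith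
  obtain ⟨q, hq, n, r, hr, hmoment⟩ :=
    h.exists_setLIntegral_enorm_charFun_pow_le hρ0 hi hj hij hβ1
  obtain ⟨C, hC, hball⟩ := hfrostman (2 * r / b) (by positivity)
  obtain ⟨l, hl⟩ := pow_unbounded_of_one_lt D ((one_lt_inv₀ hρ).2 hρ1)
  refine ⟨q, hq, β * P, by positivity, (lt_div_iff₀ hP0).1 hβ, n * β ^ (m + l) * C,
    fun k T hT hT' => ?_⟩
  have hYm : Measurable fun x => T * g x := hg.const_mul T
  have hYmem : ∀ᵐ x ∂μ, T * g x ∈ closedBall 0 (|ρ|⁻¹ ^ (k + m + l)) := by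
    filter_upwards [hS] with x hx
    rw [mem_closedBall_zero_iff, norm_mul, pow_add]
    exact mul_le_mul hT' ((hD x hx).trans hl.le) (abs_nonneg _) (by positivity)
  have hYball : ∀ z, μ.map (fun x => T * g x) (closedBall z r) ≤ ENNReal.ofReal (C * P ^ k) := by
    refine measure_map_closedBall_le_of_expanding hS hYm (c := b * |ρ|⁻¹ ^ k) (by positivity)
      (fun x hx y hy => ?_) fun x => ?_
    · rw [← mul_sub, abs_mul, mul_right_comm, mul_comm]
      exact mul_le_mul hT (hexp x hx y hy) (by positivity) (abs_nonneg T)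
    · rw [show 2 * r / (b * |ρ|⁻¹ ^ k) = 2 * r / b * |ρ| ^ k by rw [inv_pow]; field_simp,
        ← ofReal_measureReal]
      exact ENNReal.ofReal_le_ofReal (hball k x)
  have hint : ∫ x, ‖charFun μ (T * g x)‖ ^ q ∂μ ≤ n * β ^ (k + m + l) * (C * P ^ k) := by
    refine integral_norm_comp_pow_le hYm measurable_charFun measurableSet_closedBall hYmem
      (by positivity) ?_
    rw [ENNReal.ofReal_mul (by positivity), ENNReal.ofReal_mul (by positivity),
      ENNReal.ofReal_pow hβ0.le, ENNReal.ofReal_natCast]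
    exact hmoment _ _ _ hYball
  exact hint.trans_eq (by ring)

lemma exists_integral_norm_charFun_le [IsProbabilityMeasure μ]
    (h : IsSelfSimilarMeasure ρ a p μ) (hρ0 : ρ ≠ 0) (hρ1 : |ρ| < 1) {i j : ι} (hi : 0 < p i)
    (hj : 0 < p j) (hij : a i ≠ a j) {S : Set ℝ} (hS : ∀ᵐ x ∂μ, x ∈ S) {g : ℝ → ℝ}
    (hg : Measurable g) {b D : ℝ} (hb : 0 < b)
    (hexp : ∀ x ∈ S, ∀ y ∈ S, b * |x - y| ≤ |g x - g y|) (hD : ∀ x ∈ S, |g x| ≤ D) (m : ℕ) :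
    ∃ s, |ρ| < s ∧ s < 1 ∧ ∃ C > 0, ∀ (k : ℕ) (T : ℝ), |ρ|⁻¹ ^ k ≤ |T| → |T| ≤ |ρ|⁻¹ ^ (k + m) →
      ∫ x, ‖charFun μ (T * g x)‖ ∂μ ≤ C * s ^ k := by
  obtain ⟨q, hq, θ, hθ0, hθ1, C, hpow⟩ :=
    h.exists_integral_norm_charFun_pow_le hρ0 hρ1 hi hj hij hS hg hb hexp hD m
  obtain ⟨s, hρs, hs1, hθs⟩ := exists_lt_one_le_pow hρ1 hθ1 q
  have hs0 : 0 < s := (abs_nonneg ρ).trans_lt hρs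
  refine ⟨s, hρs, hs1, max 1 C, by positivity, fun k T hT hT' => ?_⟩
  have hle : ∀ x, ‖charFun μ (T * g x)‖ ≤ 1 := fun x => norm_charFun_le_one _
  have hmeas : Measurable fun x => ‖charFun μ (T * g x)‖ :=
    (measurable_charFun.comp (hg.const_mul T)).norm
  have hjensen : (∫ x, ‖charFun μ (T * g x)‖ ∂μ) ^ q ≤ ∫ x, ‖charFun μ (T * g x)‖ ^ q ∂μ :=
    (convexOn_pow q).map_integral_le (continuous_pow q).continuousOn isClosed_Ici
      (ae_of_all _ fun x => norm_nonneg _)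
      (Integrable.of_bound (C := 1) hmeas.aestronglyMeasurable
        (ae_of_all _ fun x => by rw [norm_norm]; exact hle x))
      (Integrable.of_bound (C := 1) (hmeas.pow_const q).aestronglyMeasurable
        (ae_of_all _ fun x => by
          rw [Function.comp_apply, norm_pow, norm_norm]
          exact pow_le_one₀ (norm_nonneg _) (hle x)))
  refine le_of_pow_le_pow_left₀ hq (by positivity) ?_
  calc (∫ x, ‖charFun μ (T * g x)‖ ∂μ) ^ q ≤ C * θ ^ k := hjensen.trans (hpow k T hT hT')
    _ ≤ max 1 C ^ q * (s ^ q) ^ k := by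
        gcongr
        exact (le_max_right 1 C).trans (le_self_pow₀ (le_max_left 1 C) hq)
    _ = (max 1 C * s ^ k) ^ q := by ring

lemma norm_integral_exp_le_integral_norm_charFun_pow [IsProbabilityMeasure μ]
    (h : IsSelfSimilarMeasure ρ a p μ) {S : Set ℝ} (hmaps : ∀ j, ∀ x ∈ S, ρ * x + a j ∈ S)
    (hS : ∀ᵐ x ∂μ, x ∈ S) {D : ℝ} (hD : ∀ x ∈ S, ∀ y ∈ S, |x - y| ≤ D) (n : ℕ) {f g : ℝ → ℝ}
    (hf : Measurable f) (hg : Measurable g) {B : ℝ} (hB : 0 ≤ B)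
    (hfg : ∀ x ∈ S, ∀ t ∈ S, |f t - f x - g x * (t - x)| ≤ B * (t - x) ^ 2) :
    ‖∫ t, Complex.exp (f t * Complex.I) ∂μ‖ ≤
      ∫ x, ‖charFun μ (ρ ^ n * g x)‖ ∂μ + B * D ^ 2 * (ρ ^ 2) ^ n := by
  induction n generalizing f g B with
  | zero => simpa using norm_integral_exp_le_integral_norm_charFun hS hD hf hg hB hfg
  | succ n ih =>
    have hexp : Measurable fun t => Complex.exp (f t * Complex.I) := by fun_prop
    have hmeas : Measurable fun x => ‖charFun μ (ρ ^ (n + 1) * g x)‖ :=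
      (measurable_charFun.comp (hg.const_mul _)).norm
    have hint : Integrable (fun x => ‖charFun μ (ρ ^ (n + 1) * g x)‖) μ :=
      Integrable.of_bound (C := 1) hmeas.aestronglyMeasurable
        (ae_of_all _ fun x => by rw [norm_norm]; exact norm_charFun_le_one _)
    have hpiece : ∀ j, ‖∫ t, Complex.exp (f (ρ * t + a j) * Complex.I) ∂μ‖ ≤
        ∫ x, ‖charFun μ (ρ ^ (n + 1) * g (ρ * x + a j))‖ ∂μ + B * D ^ 2 * (ρ ^ 2) ^ (n + 1) :=
      fun j => by
      have hrescaled := ih (f := fun t => f (ρ * t + a j)) (g := fun x => ρ * g (ρ * x + a j))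
        (B := B * ρ ^ 2) (by fun_prop) (by fun_prop) (by positivity) fun x hx t ht => by
          have hj := hfg _ (hmaps j x hx) _ (hmaps j t ht)
          rwa [add_sub_add_right_eq_sub, ← mul_sub, mul_pow, ← mul_assoc, ← mul_assoc,
            mul_comm (g _) ρ] at hj
      convert hrescaled using 1
      simp only [pow_succ, mul_assoc]
      ring
    calc ‖∫ t, Complex.exp (f t * Complex.I) ∂μ‖
        = ‖∑ j, p j • ∫ t, Complex.exp (f (ρ * t + a j) * Complex.I) ∂μ‖ := by
          rw [h.integral_eq_sum hexp.stronglyMeasurable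
            (integrable_exp_ofReal_mul_I hf.aemeasurable)]
      _ ≤ ∑ j, p j * (∫ x, ‖charFun μ (ρ ^ (n + 1) * g (ρ * x + a j))‖ ∂μ +
            B * D ^ 2 * (ρ ^ 2) ^ (n + 1)) := by
          refine norm_sum_le_of_le _ fun j _ => ?_
          rw [norm_smul, norm_of_nonneg (h.weight_nonneg j)]
          exact mul_le_mul_of_nonneg_left (hpiece j) (h.weight_nonneg j)
      _ = ∫ x, ‖charFun μ (ρ ^ (n + 1) * g x)‖ ∂μ + B * D ^ 2 * (ρ ^ 2) ^ (n + 1) := by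
          rw [h.integral_eq_sum hmeas.stronglyMeasurable hint]
          simp only [mul_add, Finset.sum_add_distrib, ← Finset.sum_mul, h.sum_weight, one_mul,
            smul_eq_mul]

lemma exists_norm_integral_exp_le_rpow [IsProbabilityMeasure μ]
    (h : IsSelfSimilarMeasure ρ a p μ) (hρ0 : ρ ≠ 0) (hρ1 : |ρ| < 1) {i j : ι} (hi : 0 < p i)
    (hj : 0 < p j) (hij : a i ≠ a j) {S : Set ℝ} (hmaps : ∀ j, ∀ x ∈ S, ρ * x + a j ∈ S)
    (hS : ∀ᵐ x ∂μ, x ∈ S) {D : ℝ} (hD : ∀ x ∈ S, ∀ y ∈ S, |x - y| ≤ D) {f g : ℝ → ℝ}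
    (hf : Measurable f) (hg : Measurable g) {b B M : ℝ} (hb : 0 < b) (hB : 0 ≤ B)
    (hexp : ∀ x ∈ S, ∀ y ∈ S, b * |x - y| ≤ |g x - g y|) (hM : ∀ x ∈ S, |g x| ≤ M)
    (hfg : ∀ x ∈ S, ∀ t ∈ S, |f t - f x - g x * (t - x)| ≤ B * (t - x) ^ 2) :
    ∃ γ > (0 : ℝ), ∃ C > (0 : ℝ), ∀ ξ : ℝ, 1 ≤ |ξ| →
      ‖∫ t, Complex.exp ((ξ * f t : ℝ) * Complex.I) ∂μ‖ ≤ C * |ξ| ^ (-γ) := by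
  have hρ : 0 < |ρ| := abs_pos.2 hρ0
  have hρinv : 1 < |ρ|⁻¹ := (one_lt_inv₀ hρ).2 hρ1
  have hcancel : ∀ n : ℕ, |ρ| ^ n * |ρ|⁻¹ ^ n = 1 := fun n => by
    rw [← mul_pow, mul_inv_cancel₀ hρ.ne', one_pow]
  obtain ⟨s, hρs, hs1, C, hC, hdecay⟩ :=
    h.exists_integral_norm_charFun_le hρ0 hρ1 hi hj hij hS hg hb hexp hM 3
  refine exists_rpow_decay_of_geometric_decay (one_lt_pow₀ hρinv three_ne_zero)
    (hρ.trans hρs) hs1 (C := C + B * D ^ 2 * |ρ|⁻¹ ^ 3) (by positivity) fun k ξ hξ hξ' => ?_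
  have hlinear : ‖∫ t, Complex.exp ((ξ * f t : ℝ) * Complex.I) ∂μ‖ ≤
      ∫ x, ‖charFun μ (ρ ^ (2 * k) * (ξ * g x))‖ ∂μ + |ξ| * B * D ^ 2 * (ρ ^ 2) ^ (2 * k) :=
    h.norm_integral_exp_le_integral_norm_charFun_pow hmaps hS hD (2 * k) (hf.const_mul ξ)
      (hg.const_mul ξ) (by positivity) fun x hx t ht => by
        rw [← mul_sub, mul_assoc ξ, ← mul_sub, abs_mul, mul_assoc]
        exact mul_le_mul_of_nonneg_left (hfg x hx t ht) (abs_nonneg ξ)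
  have hscale : |ρ| ^ (2 * k) * (|ρ|⁻¹ ^ 3) ^ k = |ρ|⁻¹ ^ k := by
    linear_combination hcancel (2 * k) * |ρ|⁻¹ ^ k
  have hmain : ∫ x, ‖charFun μ (ρ ^ (2 * k) * (ξ * g x))‖ ∂μ ≤ C * s ^ k := by
    simp only [← mul_assoc]
    refine hdecay k _ ?_ ?_ <;> rw [abs_mul, abs_pow]
    · rw [← hscale]
      gcongr
    · rw [pow_add, ← hscale, mul_assoc, ← pow_succ]
      gcongr
  have herror : |ξ| * B * D ^ 2 * (ρ ^ 2) ^ (2 * k) ≤ B * D ^ 2 * |ρ|⁻¹ ^ 3 * s ^ k :=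
    calc |ξ| * B * D ^ 2 * (ρ ^ 2) ^ (2 * k)
        ≤ (|ρ|⁻¹ ^ 3) ^ (k + 1) * B * D ^ 2 * (|ρ| ^ 2) ^ (2 * k) := by rw [sq_abs]; gcongr
      _ = B * D ^ 2 * |ρ|⁻¹ ^ 3 * (|ρ| ^ k * (|ρ| ^ (3 * k) * |ρ|⁻¹ ^ (3 * k))) := by ring
      _ ≤ B * D ^ 2 * |ρ|⁻¹ ^ 3 * s ^ k := by
          rw [hcancel, mul_one]
          gcongr
  calc _ ≤ _ := hlinear
    _ ≤ C * s ^ k + B * D ^ 2 * |ρ|⁻¹ ^ 3 * s ^ k := add_le_add hmain herror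
    _ = (C + B * D ^ 2 * |ρ|⁻¹ ^ 3) * s ^ k := by ring

lemma exists_norm_integral_exp_le_rpow_of_contDiff [IsProbabilityMeasure μ]
    (h : IsSelfSimilarMeasure ρ a p μ) (hρ0 : ρ ≠ 0) (hρ1 : |ρ| < 1) {i j : ι} (hi : 0 < p i)
    (hj : 0 < p j) (hij : a i ≠ a j) {φ : ℝ → ℝ} (hφ : ContDiff ℝ 2 φ)
    (hφ'' : ∀ t, deriv (deriv φ) t ≠ 0) :
    ∃ γ > (0 : ℝ), ∃ C > (0 : ℝ), ∀ ξ : ℝ, 1 ≤ |ξ| →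
      ‖∫ t, Complex.exp ((ξ * φ t : ℝ) * Complex.I) ∂μ‖ ≤ C * |ξ| ^ (-γ) := by
  obtain ⟨R, hR⟩ := exists_forall_abs_le_one_sub_abs_mul hρ1 a
  have hcompact : IsCompact (closedBall (0 : ℝ) R) := isCompact_closedBall 0 R
  have hconvex : Convex ℝ (closedBall (0 : ℝ) R) := convex_closedBall 0 R
  have hφ' : ContDiff ℝ 1 (deriv φ) := ContDiff.deriv' hφ
  obtain ⟨K, hK⟩ :=
    hφ'.locallyLipschitz.locallyLipschitzOn.exists_lipschitzOnWith_of_compact hcompact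
  obtain ⟨M, hM⟩ := hcompact.exists_bound_of_continuousOn hφ'.continuous.continuousOn
  obtain ⟨b, hb, hφb⟩ := hcompact.exists_forall_le' hφ'.continuous_deriv_one.abs.continuousOn
    fun t _ => abs_pos.2 (hφ'' t)
  have hmaps : ∀ j, ∀ x ∈ closedBall 0 R, ρ * x + a j ∈ closedBall 0 R := fun j x hx => by
    rw [mem_closedBall_zero_iff, norm_eq_abs] at hx ⊢
    calc |ρ * x + a j| ≤ |ρ| * |x| + |a j| := abs_mul ρ x ▸ abs_add_le _ _
      _ ≤ |ρ| * R + (1 - |ρ|) * R := by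
          gcongr
          exact hR j
      _ = R := by ring
  have hdiam : ∀ x ∈ closedBall 0 R, ∀ y ∈ closedBall 0 R, |x - y| ≤ 2 * R := fun x hx y hy => by
    have htri := dist_triangle_right x y 0
    rw [mem_closedBall] at hx hy
    rw [← Real.dist_eq]
    linarith
  have htaylor : ∀ x ∈ closedBall 0 R, ∀ t ∈ closedBall 0 R,
      |φ t - φ x - deriv φ x * (t - x)| ≤ K * (t - x) ^ 2 := fun x hx t ht => by
    rw [mul_comm]
    exact norm_sub_sub_smul_deriv_le_of_lipschitzOnWith (hφ.differentiable two_ne_zero) hconvex hK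
      hx ht
  exact h.exists_norm_integral_exp_le_rpow hρ0 hρ1 hi hj hij hmaps (h.ae_mem_closedBall hρ1 hR)
    hdiam hφ.continuous.measurable hφ'.continuous.measurable hb K.2
    (fun x hx y hy => mul_abs_sub_le_abs_sub_of_le_abs_deriv
      (hφ'.differentiable one_ne_zero) hconvex hφb hx hy) hM htaylor

end IsSelfSimilarMeasure

end SelfSimilar

lemma translation_ne_of_disjoint_image {ρ b b' : ℝ} {K : Set ℝ} (hK : K.Nonempty)
    (hsep : Disjoint ((fun x => ρ * x + b) '' K) ((fun x => ρ * x + b') '' K)) : b ≠ b' := by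
  rintro rfl
  exact (hK.image _).ne_empty (disjoint_self.1 hsep)

theorem stmt1_general {ι : Type*} [Fintype ι] {ρ : ℝ} (hρ0 : ρ ≠ 0) (hρ1 : |ρ| < 1) {a p : ι → ℝ}
    (hp : ∀ j, 0 ≤ p j) {i j : ι} (hi : 0 < p i) (hj : 0 < p j) (hij : a i ≠ a j)
    {μ : Measure ℝ} [IsProbabilityMeasure μ]
    (hμ : μ = ∑ j, ENNReal.ofReal (p j) • Measure.map (fun x => ρ * x + a j) μ)
    {φ : ℝ → ℝ} (hφ : ContDiff ℝ 2 φ) (hφ'' : ∀ t, deriv (deriv φ) t ≠ 0) :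
    ∃ γ > (0 : ℝ), ∃ C > (0 : ℝ), ∀ ξ : ℝ, 1 ≤ |ξ| →
      ‖∫ t, Complex.exp (2 * Real.pi * Complex.I * ξ * t) ∂(Measure.map φ μ)‖
        ≤ C * |ξ| ^ (-γ) := by
  obtain ⟨γ, hγ, C, hC, hdecay⟩ :=
    IsSelfSimilarMeasure.exists_norm_integral_exp_le_rpow_of_contDiff ⟨hp, hμ⟩ hρ0 hρ1 hi hj hij
      hφ hφ''
  refine ⟨γ, hγ, C, hC, fun ξ hξ => ?_⟩
  have hangular : ∫ t, Complex.exp (2 * π * Complex.I * ξ * t) ∂(μ.map φ) =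
      ∫ t, Complex.exp ((2 * π * ξ * φ t : ℝ) * Complex.I) ∂μ := by
    rw [integral_map hφ.continuous.aemeasurable
      (Continuous.aestronglyMeasurable (by fun_prop))]
    congr 1 with t
    push_cast
    ring_nf
  have hle : |ξ| ≤ |2 * π * ξ| := by
    rw [abs_mul, abs_of_pos two_pi_pos]
    exact le_mul_of_one_le_left (abs_nonneg ξ) (by linarith [pi_gt_three])
  calc _ ≤ C * |2 * π * ξ| ^ (-γ) := hangular ▸ hdecay _ (hξ.trans hle)
    _ ≤ C * |ξ| ^ (-γ) := by
        gcongr C * ?_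
        exact rpow_le_rpow_of_nonpos (by linarith) hle (by linarith)

/-- the Fourier transform of the pushforward of the homogeneous self-similar
measure under a `C²` map with positive second derivative has power decay. -/
theorem stmt1
    (m : ℕ) (hm : 2 ≤ m) (ρ : ℝ) (hρ0 : 0 < ρ) (hρ1 : ρ < 1)
    (a : Fin m → ℝ) (p : Fin m → ℝ) (hp : ∀ j, 0 < p j) (hp1 : ∑ j, p j = 1)
    (μ : Measure ℝ) [IsProbabilityMeasure μ]
    (hμ : μ = ∑ j : Fin m, ENNReal.ofReal (p j) • Measure.map (fun x => ρ * x + a j) μ)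
    (K : Set ℝ) (hKc : IsCompact K) (hKne : K.Nonempty)
    (hKattr : K = ⋃ j : Fin m, (fun x => ρ * x + a j) '' K)
    (hsep : ∀ j j' : Fin m, j ≠ j' →
      Disjoint ((fun x => ρ * x + a j) '' K) ((fun x => ρ * x + a j') '' K))
    (φ : ℝ → ℝ) (hφ : ContDiff ℝ 2 φ) (hφ'' : ∀ t, 0 < deriv (deriv φ) t) :
    ∃ γ > (0 : ℝ), ∃ C > (0 : ℝ), ∀ ξ : ℝ, 1 ≤ |ξ| →
      ‖∫ t, Complex.exp (2 * Real.pi * Complex.I * ξ * t) ∂(Measure.map φ μ)‖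
        ≤ C * |ξ| ^ (-γ) := by
  have hij : (⟨0, by omega⟩ : Fin m) ≠ ⟨1, by omega⟩ := by simp
  exact stmt1_general hρ0.ne' (by rwa [abs_of_pos hρ0]) (fun j => (hp j).le) (hp _) (hp _)
    (translation_ne_of_disjoint_image hKne (hsep _ _ hij)) hμ hφ fun t => (hφ'' t).ne'
end
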